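/- arXiv:1404.1692 — 6 statements merged into one kernel-verified Lean document; each statement's English description precedes it below -/
import Mathlib

section
/- Fix θ>−1. The function x ↦ f(x;θ) = log(1 + e^{−x^{−α}}(e^{−θx^{−α}} − 1)) + θx^{−α} − θx^{−2α} is integrable on (0,∞); in particular it is integrable near x=0 and near x=∞. -/
open MeasureTheory Filter

/-!
Put `u = x ^ (-α)`, so that `f(x; θ) = φ(u)`. The terms `θ * u - θ * u ^ 2` of `φ` cancel the Taylor
expansion of its logarithm at `u = 0` through second order, hence `φ(u) = O(u³)` there. The argument
of the logarithm is a convex combination of `1` and `exp (-θ * u)`, so the logarithm is at most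
`|θ| * u` in absolute value, and `φ(u) = O(u²)` as `u → ∞`. Thus `f` is `O(x ^ (-3α))` at infinity
and `O(x ^ (-2α))` at zero, and `2α < 1 < 3α`.
-/

open Asymptotics Set Topology

theorem integrableOn_Ioi_comp_rpow_of_isBigO {E : Type*} [NormedAddCommGroup E] [NormedSpace ℝ E]
    {g : ℝ → E} {a b c : ℝ} (hc : c ≠ 0) (hg : LocallyIntegrableOn g (Ioi 0))
    (hg_top : g =O[atTop] (· ^ (-a))) (hca : c⁻¹ < a)
    (hg_zero : g =O[𝓝[>] 0] (· ^ (-b))) (hbc : b < c⁻¹) :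
    IntegrableOn (fun x : ℝ => g (x ^ c)) (Ioi 0) := by
  rw [← integrableOn_Ioi_comp_rpow_iff' _ (inv_ne_zero hc)]
  have h_norm : IntegrableOn (fun u : ℝ => u ^ (c⁻¹ - 1) * ‖g u‖) (Ioi 0) :=
    mellin_convergent_of_isBigO_scalar hg.norm hg_top.norm_left hca hg_zero.norm_left hbc
  have h_rpow : ContinuousOn (fun u : ℝ => u ^ (c⁻¹ - 1)) (Ioi 0) :=
    continuousOn_id.rpow_const fun u hu => Or.inl (ne_of_gt hu)
  have h_smul : IntegrableOn (fun u : ℝ => u ^ (c⁻¹ - 1) • g u) (Ioi 0) := by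
    refine h_norm.mono'
      (hg.continuousOn_smul isOpen_Ioi.isLocallyClosed h_rpow).aestronglyMeasurable
      ((ae_restrict_mem measurableSet_Ioi).mono fun u (hu : 0 < u) => ?_)
    rw [norm_smul, Real.norm_of_nonneg (Real.rpow_nonneg hu.le _)]
  refine h_smul.congr_fun (fun u (hu : 0 < u) => ?_) measurableSet_Ioi
  simp only [Real.rpow_inv_rpow hu.le hc]

theorem exp_mul_sub_quadratic_isBigO (c : ℝ) :
    (fun u : ℝ => Real.exp (c * u) - (1 + c * u + c ^ 2 / 2 * u ^ 2)) =O[𝓝 0] (· ^ 3) := by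
  have h_lim : Tendsto (fun u : ℝ => c * u) (𝓝 0) (𝓝 0) :=
    (continuous_const_mul c).tendsto' 0 0 (mul_zero c)
  have h_cube : (fun u : ℝ => (c * u) ^ 3) =O[𝓝 0] (· ^ 3) :=
    (isBigO_const_mul_self c id _).pow 3
  refine (((Real.exp_sub_sum_range_isBigO_pow 3).comp_tendsto h_lim).trans h_cube).congr_left
    fun u => ?_
  norm_num [Finset.sum_range_succ]
  ring

theorem log_one_add_add_sum_range_isBigO (n : ℕ) :
    (fun x : ℝ => Real.log (1 + x) + ∑ i ∈ Finset.range n, (-x) ^ (i + 1) / (i + 1))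
      =O[𝓝 0] (· ^ (n + 1)) := by
  refine IsBigO.of_bound 2 ?_
  filter_upwards [eventually_norm_sub_lt 0 (one_half_pos (α := ℝ))] with x hx
  rw [sub_zero, Real.norm_eq_abs] at hx
  calc ‖Real.log (1 + x) + ∑ i ∈ Finset.range n, (-x) ^ (i + 1) / (i + 1)‖
      = |∑ i ∈ Finset.range n, (-x) ^ (i + 1) / (i + 1) + Real.log (1 - -x)| := by
        rw [Real.norm_eq_abs, add_comm, sub_neg_eq_add]
    _ ≤ |x| ^ (n + 1) / (1 - |x|) := by
        simpa only [abs_neg] using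
          Real.abs_log_sub_add_sum_range_le (x := -x) (by rw [abs_neg]; linarith) n
    _ ≤ |x| ^ (n + 1) / (1 / 2) := by gcongr; linarith
    _ = 2 * ‖x ^ (n + 1)‖ := by rw [norm_pow, Real.norm_eq_abs]; ring

theorem log_one_add_sub_quadratic_isBigO {y : ℝ → ℝ} {a b : ℝ}
    (hy : (fun u => y u - (a * u + b * u ^ 2)) =O[𝓝 0] (· ^ 3)) :
    (fun u => Real.log (1 + y u) - (a * u + (b - a ^ 2 / 2) * u ^ 2)) =O[𝓝 0] (· ^ 3) := by
  have h_linear : (fun u => a * u) =O[𝓝 0] (fun u : ℝ => u) := isBigO_const_mul_self a _ _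
  have h_sub_linear : (fun u => y u - a * u) =O[𝓝 0] (fun u : ℝ => u ^ 2) :=
    ((hy.trans (isLittleO_pow_pow (by norm_num)).isBigO).add
      (isBigO_const_mul_self b (fun u : ℝ => u ^ 2) _)).congr_left fun u => by ring
  have hy_linear : y =O[𝓝 0] (fun u : ℝ => u) :=
    ((h_sub_linear.trans (isLittleO_pow_id one_lt_two).isBigO).add h_linear).congr_left
      fun u => by ring
  have h_sq : (fun u => y u ^ 2 - a ^ 2 * u ^ 2) =O[𝓝 0] (fun u : ℝ => u ^ 3) :=
    (h_sub_linear.mul (hy_linear.add h_linear)).congr (fun u => by ring) fun u => by ring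
  have h_log : (fun u => Real.log (1 + y u) - (y u - y u ^ 2 / 2))
      =O[𝓝 0] (fun u : ℝ => u ^ 3) := by
    refine (((log_one_add_add_sum_range_isBigO 2).comp_tendsto
      (hy_linear.trans_tendsto tendsto_id)).trans (hy_linear.pow 3)).congr_left fun u => ?_
    norm_num [Finset.sum_range_succ]
    ring
  exact ((h_log.add hy).sub (h_sq.const_mul_left (1 / 2))).congr_left fun u => by ring

theorem one_add_mul_exp_sub_one_mem_Icc {p : ℝ} (hp : p ∈ Icc 0 1) (s : ℝ) :
    1 + p * (Real.exp s - 1) ∈ Icc (Real.exp (-|s|)) (Real.exp |s|) := by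
  have h_one : (1 : ℝ) ∈ Icc (Real.exp (-|s|)) (Real.exp |s|) := by simp
  have h_exp : Real.exp s ∈ Icc (Real.exp (-|s|)) (Real.exp |s|) :=
    ⟨Real.exp_le_exp.mpr (neg_abs_le s), Real.exp_le_exp.mpr (le_abs_self s)⟩
  simpa using (convex_Icc _ _).add_smul_sub_mem h_one h_exp hp

theorem one_add_mul_exp_sub_one_pos {p : ℝ} (hp : p ∈ Icc 0 1) (s : ℝ) :
    0 < 1 + p * (Real.exp s - 1) :=
  (Real.exp_pos _).trans_le (one_add_mul_exp_sub_one_mem_Icc hp s).1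

theorem abs_log_one_add_mul_exp_sub_one_le {p : ℝ} (hp : p ∈ Icc 0 1) (s : ℝ) :
    |Real.log (1 + p * (Real.exp s - 1))| ≤ |s| := by
  have h_pos := one_add_mul_exp_sub_one_pos hp s
  obtain ⟨h_lower, h_upper⟩ := one_add_mul_exp_sub_one_mem_Icc hp s
  exact abs_le.mpr ⟨(Real.le_log_iff_exp_le h_pos).mpr h_lower,
    (Real.log_le_iff_le_exp h_pos).mpr h_upper⟩

theorem exp_neg_mem_Icc {u : ℝ} (hu : 0 ≤ u) : Real.exp (-u) ∈ Icc 0 1 :=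
  ⟨(Real.exp_pos _).le, Real.exp_le_one_iff.mpr (neg_nonpos.mpr hu)⟩

/-- The function `φ` with `f(x; θ) = φ(x ^ (-α))`: what is left of its logarithm after subtracting
the second-order Taylor polynomial `-θ * u + θ * u ^ 2` at `u = 0`. -/
noncomputable def logTaylorRemainder (θ u : ℝ) : ℝ :=
  Real.log (1 + Real.exp (-u) * (Real.exp (-θ * u) - 1)) + θ * u - θ * u ^ 2

namespace logTaylorRemainder

variable (θ : ℝ)

theorem continuousOn_Ici : ContinuousOn (logTaylorRemainder θ) (Ici 0) := by
  have h_log : ContinuousOn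
      (fun u => Real.log (1 + Real.exp (-u) * (Real.exp (-θ * u) - 1))) (Ici 0) :=
    ContinuousOn.log (by fun_prop) fun u hu =>
      (one_add_mul_exp_sub_one_pos (exp_neg_mem_Icc hu) _).ne'
  exact (h_log.add (by fun_prop)).sub (by fun_prop)

theorem isBigO_cube_nhds_zero : logTaylorRemainder θ =O[𝓝 0] (· ^ 3) := by
  have h_exp : (fun u => Real.exp (-u) * (Real.exp (-θ * u) - 1)
      - (-θ * u + (θ + θ ^ 2 / 2) * u ^ 2)) =O[𝓝 0] (· ^ 3) := by
    refine ((exp_mul_sub_quadratic_isBigO (-(1 + θ))).sub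
      (exp_mul_sub_quadratic_isBigO (-1))).congr_left fun u => ?_
    have h_mul : Real.exp (-(1 + θ) * u) = Real.exp (-u) * Real.exp (-θ * u) := by
      rw [← Real.exp_add]
      ring_nf
    rw [h_mul, neg_one_mul]
    ring
  refine (log_one_add_sub_quadratic_isBigO h_exp).congr_left fun u => ?_
  rw [logTaylorRemainder]
  ring

theorem isBigO_sq_atTop : logTaylorRemainder θ =O[atTop] (· ^ 2) := by
  have h_log : (fun u => Real.log (1 + Real.exp (-u) * (Real.exp (-θ * u) - 1)))
      =O[atTop] (fun u : ℝ => u) := by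
    refine IsBigO.of_bound |θ| ((eventually_ge_atTop 0).mono fun u hu => ?_)
    calc ‖Real.log (1 + Real.exp (-u) * (Real.exp (-θ * u) - 1))‖
        ≤ |-θ * u| := abs_log_one_add_mul_exp_sub_one_le (exp_neg_mem_Icc hu) _
      _ = |θ| * ‖u‖ := by rw [abs_mul, abs_neg, Real.norm_eq_abs]
  have h_linear : (fun u => θ * u) =O[atTop] (fun u : ℝ => u) := isBigO_const_mul_self θ _ _
  have h_id_sq : (fun u : ℝ => u) =O[atTop] (fun u : ℝ => u ^ 2) := by
    simpa only [pow_one] using (isLittleO_pow_pow_atTop_of_lt (𝕜 := ℝ) one_lt_two).isBigO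
  exact ((h_log.add h_linear).trans h_id_sq).sub (isBigO_const_mul_self θ _ _)

end logTaylorRemainder

theorem f_integrable_general {α : ℝ} (hα : α ∈ Ioo (1 / 3 : ℝ) (1 / 2)) (θ : ℝ) :
    IntegrableOn
      (fun x : ℝ =>
        Real.log (1 + Real.exp (-x ^ (-α)) * (Real.exp (-θ * x ^ (-α)) - 1))
          + θ * x ^ (-α) - θ * x ^ (-(2 * α)))
      (Ioi (0 : ℝ)) := by
  have hα_pos : 0 < α := by linarith [hα.1]
  have h_lower : -3 < (-α)⁻¹ := by
    rw [inv_neg, neg_lt_neg_iff, inv_lt_comm₀ hα_pos three_pos, ← one_div]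
    exact hα.1
  have h_upper : (-α)⁻¹ < -2 := by
    rw [inv_neg, neg_lt_neg_iff, lt_inv_comm₀ two_pos hα_pos, ← one_div]
    exact hα.2
  have h_loc : LocallyIntegrableOn (logTaylorRemainder θ) (Ioi 0) :=
    ((logTaylorRemainder.continuousOn_Ici θ).mono Ioi_subset_Ici_self).locallyIntegrableOn
      measurableSet_Ioi
  have h_comp : IntegrableOn (fun x : ℝ => logTaylorRemainder θ (x ^ (-α))) (Ioi 0) :=
    integrableOn_Ioi_comp_rpow_of_isBigO (neg_ne_zero.mpr hα_pos.ne') h_loc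
      (by simpa using logTaylorRemainder.isBigO_sq_atTop θ) h_upper
      (by simpa using (logTaylorRemainder.isBigO_cube_nhds_zero θ).mono nhdsWithin_le_nhds) h_lower
  refine h_comp.congr_fun (fun x (hx : 0 < x) => ?_) measurableSet_Ioi
  have h_sq : (x ^ (-α)) ^ 2 = x ^ (-(2 * α)) := by
    rw [← Real.rpow_mul_natCast hx.le]
    ring_nf
  simp only [logTaylorRemainder, h_sq]

/-- Lemma 3.1, integrability of `f(·;θ)`.
Fix `θ > -1`. The function
`x ↦ f(x;θ) = log(1 + e^{-x^{-α}}(e^{-θ x^{-α}} - 1)) + θ x^{-α} - θ x^{-2α}`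
is integrable on `(0,∞)`. -/
theorem f_integrable
    (τ α : ℝ) (hτ : τ ∈ Set.Ioo (3 : ℝ) 4) (hα : α = 1 / (τ - 1))
    (θ : ℝ) (hθ : -1 < θ) :
    MeasureTheory.IntegrableOn
      (fun x : ℝ =>
        Real.log (1 + Real.exp (-x ^ (-α)) * (Real.exp (-θ * x ^ (-α)) - 1))
          + θ * x ^ (-α) - θ * x ^ (-(2 * α)))
      (Set.Ioi (0 : ℝ)) := by
  obtain ⟨hτ_lower, hτ_upper⟩ := hτ
  refine f_integrable_general ⟨?_, ?_⟩ θ <;> rw [hα]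
  · exact one_div_lt_one_div_of_lt (by linarith) (by linarith)
  · exact one_div_lt_one_div_of_lt two_pos (by linarith)
end

section
/- Let g:(0,∞)→ℝ be differentiable and suppose there exist γ>−1 and a,b≥0 with |g'(y)| ≤ a y^{γ} e^{−by} for all y>0. Then for every α>0 there exists a constant c=c(α,γ), not depending on g, a, b or u, such that for all u>0: |Σ_{i=2}^∞ [ g(u i^{−α}) − ∫_i^{i+1} g(u x^{−α}) dx ]| ≤ c · a · min(u, b^{−1})^{1+γ}, where b^{−1} is interpreted as +∞ (so min(u,b^{−1})=u) when b=0. -/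
open MeasureTheory Filter

/-!
The error `f x - ∫ t in x..x+1, f t` made on a unit interval is at most the total variation of `f`
there, so the errors on consecutive unit intervals add up to at most the total variation of `f`.
For `f = g ∘ w` with `w` antitone and valued in `(0, u]`, that variation is at most the variation
of `g` on `(0, u]`, hence at most `∫₀ᵘ |g'| ≤ a ∫₀ᵘ t ^ γ e^{-bt} dt`. The last integral is bounded
by `u ^ (1 + γ) / (1 + γ)` on dropping the exponential, and by `Γ(1 + γ) b ^ {-(1 + γ)}` on
extending it to `(0, ∞)`.
-/

open Set
open scoped ENNReal

section Variation

lemma countable_not_continuousAt_of_locallyBoundedVariationOn {ι E : Type*} [LinearOrder ι]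
    [TopologicalSpace ι] [OrderTopology ι] [SecondCountableTopology ι] [PseudoMetricSpace E]
    {f : ι → E} (hf : LocallyBoundedVariationOn f univ) :
    {x | ¬ ContinuousAt f x}.Countable := by
  rcases isEmpty_or_nonempty ι with _ | ⟨⟨c⟩⟩
  · exact Set.to_countable _
  set v : ι → ℝ := variationOnFromTo f univ c
  have hv : Monotone v := monotoneOn_univ.1 (variationOnFromTo.monotoneOn hf (mem_univ c))
  have dist_le_of_le {x y : ι} (hxy : x ≤ y) : dist (f x) (f y) ≤ dist (v x) (v y) := by
    have hdist := (hf x y (mem_univ x) (mem_univ y)).dist_le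
      ⟨mem_univ x, left_mem_Icc.2 hxy⟩ ⟨mem_univ y, right_mem_Icc.2 hxy⟩
    rw [← variationOnFromTo.eq_of_le f univ hxy,
      ← variationOnFromTo.sub_right hf (mem_univ c) (mem_univ y) (mem_univ x)] at hdist
    rw [dist_comm (v x)]
    exact hdist.trans (le_abs_self _)
  have dist_le (x y : ι) : dist (f x) (f y) ≤ dist (v x) (v y) := by
    rcases le_total x y with hxy | hyx
    · exact dist_le_of_le hxy
    · simpa only [dist_comm] using dist_le_of_le hyx
  have continuousAt_of_continuousAt {x : ι} (hx : ContinuousAt v x) : ContinuousAt f x :=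
    tendsto_iff_dist_tendsto_zero.2 <| squeeze_zero (fun _ => dist_nonneg) (fun y => dist_le y x)
      (tendsto_iff_dist_tendsto_zero.1 hx)
  exact hv.countable_not_continuousAt.mono fun _ hx hvx => hx (continuousAt_of_continuousAt hvx)

variable {E : Type*} [NormedAddCommGroup E] {f : ℝ → E}

lemma aestronglyMeasurable_restrict_Icc_of_boundedVariationOn {μ : Measure ℝ} {a b : ℝ}
    (hf : BoundedVariationOn f (Icc a b)) : AEStronglyMeasurable f (μ.restrict (Icc a b)) := by
  rcases lt_or_ge b a with hab | hab
  · simp only [Icc_eq_empty_of_lt hab, Measure.restrict_empty, aestronglyMeasurable_zero_measure]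
  let p : ℝ → ℝ := fun x => projIcc a b hab x
  have hp : BoundedVariationOn (f ∘ p) univ := ne_top_of_le_ne_top hf <|
    eVariationOn.comp_le_of_monotoneOn f p ((monotone_projIcc hab).monotoneOn _)
      fun x _ => (projIcc a b hab x).2
  have hmeas : StronglyMeasurable (f ∘ p) := .of_countable_not_continuousAt
    (countable_not_continuousAt_of_locallyBoundedVariationOn hp.locallyBoundedVariationOn)
  refine hmeas.aestronglyMeasurable.congr ?_
  filter_upwards [ae_restrict_mem measurableSet_Icc] with x hx
  simp only [p, Function.comp_apply, projIcc_of_mem hab hx]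

lemma integrableOn_Icc_of_boundedVariationOn {μ : Measure ℝ} [IsFiniteMeasureOnCompacts μ]
    {a b : ℝ} (hf : BoundedVariationOn f (Icc a b)) : IntegrableOn f (Icc a b) μ := by
  refine .of_bound isCompact_Icc.measure_lt_top
    (aestronglyMeasurable_restrict_Icc_of_boundedVariationOn hf)
    (‖f a‖ + (eVariationOn f (Icc a b)).toReal) ?_
  filter_upwards [ae_restrict_mem measurableSet_Icc] with x hx
  calc ‖f x‖ ≤ ‖f a‖ + dist (f x) (f a) := by
        simpa only [dist_eq_norm] using norm_le_norm_add_norm_sub' (f x) (f a)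
    _ ≤ ‖f a‖ + (eVariationOn f (Icc a b)).toReal := by
        gcongr
        exact hf.dist_le hx (left_mem_Icc.2 (hx.1.trans hx.2))

variable [NormedSpace ℝ E] [CompleteSpace E]

lemma enorm_sub_integral_le_eVariationOn (f : ℝ → E) (x : ℝ) :
    ‖f x - ∫ t in x..x + 1, f t‖ₑ ≤ eVariationOn f (Icc x (x + 1)) := by
  have hx : x ≤ x + 1 := by linarith
  by_cases hf : BoundedVariationOn f (Icc x (x + 1))
  swap
  · exact (not_not.1 hf).symm ▸ le_top
  have hint : IntervalIntegrable f volume x (x + 1) :=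
    (intervalIntegrable_iff_integrableOn_Icc_of_le hx).2 (integrableOn_Icc_of_boundedVariationOn hf)
  have herror : f x - ∫ t in x..x + 1, f t = ∫ t in Ioc x (x + 1), (f x - f t) := by
    rw [← intervalIntegral.integral_of_le hx,
      intervalIntegral.integral_sub intervalIntegrable_const hint,
      intervalIntegral.integral_const, add_sub_cancel_left, one_smul]
  calc ‖f x - ∫ t in x..x + 1, f t‖ₑ ≤ ∫⁻ t in Ioc x (x + 1), ‖f x - f t‖ₑ :=
        herror ▸ enorm_integral_le_lintegral_enorm _
    _ ≤ ∫⁻ _ in Ioc x (x + 1), eVariationOn f (Icc x (x + 1)) := by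
        refine setLIntegral_mono measurable_const fun t ht => ?_
        rw [← edist_eq_enorm_sub]
        exact eVariationOn.edist_le f (left_mem_Icc.2 hx) (Ioc_subset_Icc_self ht)
    _ = eVariationOn f (Icc x (x + 1)) := by
        rw [setLIntegral_const, Real.volume_Ioc, add_sub_cancel_left, ENNReal.ofReal_one, mul_one]

lemma tsum_enorm_sub_integral_le_eVariationOn (f : ℝ → E) (m : ℝ) :
    ∑' i : ℕ, ‖f (i + m) - ∫ x in (i + m)..(i + m + 1), f x‖ₑ ≤ eVariationOn f (Ici m) := by
  refine ENNReal.tsum_le_of_sum_range_le fun n => ?_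
  have hmono : Monotone fun i : ℕ => (i : ℝ) + m := Nat.mono_cast.add_const m
  calc ∑ i ∈ Finset.range n, ‖f (i + m) - ∫ x in (i + m)..(i + m + 1), f x‖ₑ
      ≤ ∑ i ∈ Finset.range n, eVariationOn f (Icc (i + m) ((i + 1 : ℕ) + m)) := by
        refine Finset.sum_le_sum fun i _ => ?_
        have hnext : ((i + 1 : ℕ) : ℝ) + m = i + m + 1 := by push_cast; ring
        exact hnext ▸ enorm_sub_integral_le_eVariationOn f (i + m)
    _ = eVariationOn f (Icc ((0 : ℕ) + m) (n + m)) := eVariationOn.sum' f hmono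
    _ ≤ eVariationOn f (Ici m) := by
        rw [Nat.cast_zero, zero_add]
        exact eVariationOn.mono f Icc_subset_Ici_self

lemma edist_le_lintegral_enorm_deriv {a b : ℝ} (hab : a ≤ b)
    (hf : ∀ x ∈ Icc a b, DifferentiableAt ℝ f x) :
    edist (f b) (f a) ≤ ∫⁻ x in Ioc a b, ‖deriv f x‖ₑ := by
  by_cases hfin : ∫⁻ x in Ioc a b, ‖deriv f x‖ₑ = ∞
  · exact hfin ▸ le_top
  have hint : IntervalIntegrable (deriv f) volume a b :=
    (intervalIntegrable_iff_integrableOn_Ioc_of_le hab).2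
      ⟨aestronglyMeasurable_deriv f _, lt_top_iff_ne_top.2 hfin⟩
  rw [edist_eq_enorm_sub, ← intervalIntegral.integral_deriv_eq_sub (by rwa [uIcc_of_le hab]) hint,
    intervalIntegral.integral_of_le hab]
  exact enorm_integral_le_lintegral_enorm _

lemma eVariationOn_le_lintegral_enorm_deriv {s : Set ℝ} (hs : s.OrdConnected)
    (hf : ∀ x ∈ s, DifferentiableAt ℝ f x) :
    eVariationOn f s ≤ ∫⁻ x in s, ‖deriv f x‖ₑ := by
  refine iSup_le fun ⟨n, p, hp, hps⟩ => ?_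
  have hsub (i : ℕ) : Icc (p i) (p (i + 1)) ⊆ s := hs.out (hps i) (hps (i + 1))
  calc ∑ i ∈ Finset.range n, edist (f (p (i + 1))) (f (p i))
      ≤ ∑ i ∈ Finset.range n, ∫⁻ x in Ioc (p i) (p (i + 1)), ‖deriv f x‖ₑ :=
        Finset.sum_le_sum fun i _ =>
          edist_le_lintegral_enorm_deriv (hp i.le_succ) fun x hx => hf x (hsub i hx)
    _ = ∫⁻ x in ⋃ i ∈ Finset.range n, Ioc (p i) (p (i + 1)), ‖deriv f x‖ₑ :=
        (lintegral_biUnion_finset (hp.pairwise_disjoint_on_Ioc_succ.set_pairwise _)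
          (fun _ _ => measurableSet_Ioc) _).symm
    _ ≤ ∫⁻ x in s, ‖deriv f x‖ₑ :=
        lintegral_mono_set (iUnion₂_subset fun i _ => Ioc_subset_Icc_self.trans (hsub i))

end Variation

section RpowMulExp

variable {γ : ℝ}

lemma intervalIntegrable_rpow_mul_exp_neg_mul (hγ : -1 < γ) (b x y : ℝ) :
    IntervalIntegrable (fun t : ℝ => t ^ γ * Real.exp (-b * t)) volume x y :=
  (intervalIntegral.intervalIntegrable_rpow' hγ).mul_continuousOn (by fun_prop)

lemma integral_rpow_mul_exp_neg_mul_nonneg {b u : ℝ} (hu : 0 ≤ u) :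
    0 ≤ ∫ t in (0 : ℝ)..u, t ^ γ * Real.exp (-b * t) :=
  intervalIntegral.integral_nonneg hu fun _ ht =>
    mul_nonneg (Real.rpow_nonneg ht.1 γ) (Real.exp_nonneg _)

lemma integral_rpow_mul_exp_neg_mul_le_rpow {b u : ℝ} (hγ : -1 < γ) (hb : 0 ≤ b) (hu : 0 ≤ u) :
    ∫ t in (0 : ℝ)..u, t ^ γ * Real.exp (-b * t) ≤ 1 / (1 + γ) * u ^ (1 + γ) := by
  calc ∫ t in (0 : ℝ)..u, t ^ γ * Real.exp (-b * t) ≤ ∫ t in (0 : ℝ)..u, t ^ γ := by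
        refine intervalIntegral.integral_mono_on hu
          (intervalIntegrable_rpow_mul_exp_neg_mul hγ b 0 u)
          (intervalIntegral.intervalIntegrable_rpow' hγ) fun t ht => ?_
        refine mul_le_of_le_one_right (Real.rpow_nonneg ht.1 γ) (Real.exp_le_one_iff.2 ?_)
        exact mul_nonpos_of_nonpos_of_nonneg (neg_nonpos.2 hb) ht.1
    _ = 1 / (1 + γ) * u ^ (1 + γ) := by
        rw [integral_rpow (Or.inl hγ), Real.zero_rpow (by linarith), add_comm γ 1]
        ring

lemma integral_rpow_mul_exp_neg_mul_le_Gamma {b u : ℝ} (hγ : -1 < γ) (hb : 0 < b) (hu : 0 ≤ u) :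
    ∫ t in (0 : ℝ)..u, t ^ γ * Real.exp (-b * t) ≤ Real.Gamma (1 + γ) * b⁻¹ ^ (1 + γ) := by
  have hint : IntegrableOn (fun t : ℝ => t ^ γ * Real.exp (-b * t)) (Ioi 0) := by
    simpa only [Real.rpow_one] using
      integrableOn_rpow_mul_exp_neg_mul_rpow (p := 1) hγ one_pos hb
  calc ∫ t in (0 : ℝ)..u, t ^ γ * Real.exp (-b * t)
      ≤ ∫ t in Ioi (0 : ℝ), t ^ γ * Real.exp (-b * t) := by
        rw [intervalIntegral.integral_of_le hu]
        refine setIntegral_mono_set hint ?_ Ioc_subset_Ioi_self.eventuallyLE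
        filter_upwards [ae_restrict_mem measurableSet_Ioi] with t ht
        exact mul_nonneg (Real.rpow_nonneg (le_of_lt ht) γ) (Real.exp_nonneg _)
    _ = Real.Gamma (1 + γ) * b⁻¹ ^ (1 + γ) := by
        have hGamma := Real.integral_rpow_mul_exp_neg_mul_Ioi (a := 1 + γ) (by linarith) hb
        simpa only [add_sub_cancel_left, one_div, neg_mul, mul_comm (Real.Gamma _)] using hGamma

lemma integral_rpow_mul_exp_neg_mul_le_min {b u : ℝ} (hγ : -1 < γ) (hb : 0 ≤ b) (hu : 0 ≤ u) :
    ∫ t in (0 : ℝ)..u, t ^ γ * Real.exp (-b * t) ≤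
      max (1 / (1 + γ)) (Real.Gamma (1 + γ)) * (if b = 0 then u else min u b⁻¹) ^ (1 + γ) := by
  have of_u : ∫ t in (0 : ℝ)..u, t ^ γ * Real.exp (-b * t) ≤
      max (1 / (1 + γ)) (Real.Gamma (1 + γ)) * u ^ (1 + γ) :=
    (integral_rpow_mul_exp_neg_mul_le_rpow hγ hb hu).trans <|
      mul_le_mul_of_nonneg_right (le_max_left _ _) (Real.rpow_nonneg hu _)
  split_ifs with hb0
  · exact of_u
  rcases min_choice u b⁻¹ with hmin | hmin <;> rw [hmin]
  · exact of_u
  · exact (integral_rpow_mul_exp_neg_mul_le_Gamma hγ (hb.lt_of_ne' hb0) hu).trans <|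
      mul_le_mul_of_nonneg_right (le_max_right _ _) (Real.rpow_nonneg (inv_nonneg.2 hb) _)

end RpowMulExp

section Enorm

variable {E : Type*} [NormedAddCommGroup E]

lemma lintegral_enorm_le_ofReal_integral {X : Type*} [MeasurableSpace X] {μ : Measure X}
    {f : X → E} {F : X → ℝ} (hF : Integrable F μ) (hfF : ∀ᵐ x ∂μ, ‖f x‖ ≤ F x) :
    ∫⁻ x, ‖f x‖ₑ ∂μ ≤ ENNReal.ofReal (∫ x, F x ∂μ) := by
  rw [ofReal_integral_eq_lintegral_ofReal hF (hfF.mono fun _ hx => (norm_nonneg _).trans hx)]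
  refine lintegral_mono_ae (hfF.mono fun _ hx => ?_)
  rw [← ofReal_norm]
  exact ENNReal.ofReal_le_ofReal hx

lemma summable_norm_and_tsum_norm_le_of_tsum_enorm_le {ι : Type*} {f : ι → E} {C : ℝ} (hC : 0 ≤ C)
    (hf : ∑' i, ‖f i‖ₑ ≤ ENNReal.ofReal C) : Summable (fun i => ‖f i‖) ∧ ∑' i, ‖f i‖ ≤ C := by
  have hsum : Summable (fun i => ‖f i‖) :=
    tsum_enorm_ne_top_iff_summable_norm.1 (ne_top_of_le_ne_top ENNReal.ofReal_ne_top hf)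
  refine ⟨hsum, (ENNReal.ofReal_le_ofReal_iff hC).1 ?_⟩
  simpa only [ENNReal.ofReal_tsum_of_nonneg (fun i => norm_nonneg (f i)) hsum, ofReal_norm] using hf

end Enorm

lemma antitoneOn_mul_rpow_neg {α u : ℝ} (hα : 0 ≤ α) (hu : 0 ≤ u) :
    AntitoneOn (fun x : ℝ => u * x ^ (-α)) (Ioi 0) := fun _ hx _ _ hxy =>
  mul_le_mul_of_nonneg_left (Real.rpow_le_rpow_of_nonpos hx hxy (neg_nonpos.2 hα)) hu

lemma mapsTo_mul_rpow_neg {α u : ℝ} (hα : 0 ≤ α) (hu : 0 < u) :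
    MapsTo (fun x : ℝ => u * x ^ (-α)) (Ici 1) (Ioc 0 u) := fun _ hx =>
  ⟨mul_pos hu (Real.rpow_pos_of_pos (one_pos.trans_le hx) _),
    mul_le_of_le_one_right hu.le (Real.rpow_le_one_of_one_le_of_nonpos hx (neg_nonpos.2 hα))⟩

lemma eVariationOn_Ioc_le_of_norm_deriv_le {E : Type*} [NormedAddCommGroup E] [NormedSpace ℝ E]
    [CompleteSpace E] {g : ℝ → E} {γ a b u : ℝ} (hγ : -1 < γ) (hu : 0 ≤ u)
    (hg : ∀ y ∈ Ioc 0 u, DifferentiableAt ℝ g y)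
    (hg' : ∀ y ∈ Ioc 0 u, ‖deriv g y‖ ≤ a * y ^ γ * Real.exp (-b * y)) :
    eVariationOn g (Ioc 0 u) ≤
      ENNReal.ofReal (a * ∫ t in (0 : ℝ)..u, t ^ γ * Real.exp (-b * t)) := by
  refine (eVariationOn_le_lintegral_enorm_deriv ordConnected_Ioc hg).trans ?_
  rw [intervalIntegral.integral_of_le hu, ← integral_const_mul]
  refine lintegral_enorm_le_ofReal_integral
    ((intervalIntegrable_rpow_mul_exp_neg_mul hγ b 0 u).1.const_mul a) ?_
  filter_upwards [ae_restrict_mem measurableSet_Ioc] with y hy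
  simpa only [mul_assoc] using hg' y hy

theorem sum_integral_approx_general {E : Type*} [NormedAddCommGroup E] [NormedSpace ℝ E]
    [CompleteSpace E] {g : ℝ → E} {w : ℝ → ℝ} {γ a b u m : ℝ} (hγ : -1 < γ) (hb : 0 ≤ b)
    (hg : ∀ y ∈ Ioc 0 u, DifferentiableAt ℝ g y)
    (hg' : ∀ y ∈ Ioc 0 u, ‖deriv g y‖ ≤ a * y ^ γ * Real.exp (-b * y))
    (hw : AntitoneOn w (Ici m)) (hwu : MapsTo w (Ici m) (Ioc 0 u)) :
    Summable (fun i : ℕ => ‖g (w (i + m)) - ∫ x in (i + m)..(i + m + 1), g (w x)‖) ∧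
      ∑' i : ℕ, ‖g (w (i + m)) - ∫ x in (i + m)..(i + m + 1), g (w x)‖ ≤
        max (1 / (1 + γ)) (Real.Gamma (1 + γ)) * a *
          (if b = 0 then u else min u b⁻¹) ^ (1 + γ) := by
  have hu : 0 < u := (hwu self_mem_Ici).1.trans_le (hwu self_mem_Ici).2
  have ha : 0 ≤ a := by
    have hbound := (norm_nonneg _).trans (hg' u (right_mem_Ioc.2 hu))
    rw [mul_assoc] at hbound
    exact nonneg_of_mul_nonneg_left hbound (by positivity)
  have htsum := calc
    ∑' i : ℕ, ‖g (w (i + m)) - ∫ x in (i + m)..(i + m + 1), g (w x)‖ₑ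
      ≤ eVariationOn (g ∘ w) (Ici m) := tsum_enorm_sub_integral_le_eVariationOn (g ∘ w) m
    _ ≤ eVariationOn g (Ioc 0 u) := eVariationOn.comp_le_of_antitoneOn g w hw hwu
    _ ≤ ENNReal.ofReal (a * ∫ t in (0 : ℝ)..u, t ^ γ * Real.exp (-b * t)) :=
        eVariationOn_Ioc_le_of_norm_deriv_le hγ hu.le hg hg'
  obtain ⟨hsum, hle⟩ := summable_norm_and_tsum_norm_le_of_tsum_enorm_le
    (mul_nonneg ha (integral_rpow_mul_exp_neg_mul_nonneg hu.le)) htsum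
  refine ⟨hsum, hle.trans ?_⟩
  rw [mul_comm _ a, mul_assoc a]
  exact mul_le_mul_of_nonneg_left (integral_rpow_mul_exp_neg_mul_le_min hγ hb hu.le) ha

/-- Lemma 3.2, approximating sums by integrals.
Let `g : (0,∞) → ℝ` be differentiable with `|g'(y)| ≤ a y^γ e^{-by}` for all `y > 0`, where
`γ > -1` and `a, b ≥ 0`. Then for every `α > 0` there is a constant `c = c(α,γ)`, not depending
on `g`, `a`, `b` or `u`, such that for all `u > 0`,
`|Σ_{i=2}^∞ [g(u i^{-α}) - ∫_i^{i+1} g(u x^{-α}) dx]| ≤ c · a · min(u, b⁻¹)^{1+γ}`,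
where `min(u, b⁻¹)` is interpreted as `u` when `b = 0`.  (The series is indexed by
`i ↦ i + 2`, `i : ℕ`, so that it runs over `i ≥ 2`; convergence is part of the claim.) -/
theorem sum_integral_approx
    (α : ℝ) (hαpos : 0 < α) (γ : ℝ) (hγ : -1 < γ) :
    ∃ c : ℝ, 0 < c ∧
      ∀ (g : ℝ → ℝ) (a b : ℝ), 0 ≤ a → 0 ≤ b →
        (∀ y : ℝ, 0 < y → DifferentiableAt ℝ g y) →
        (∀ y : ℝ, 0 < y → |deriv g y| ≤ a * y ^ γ * Real.exp (-b * y)) →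
        ∀ u : ℝ, 0 < u →
          Summable (fun i : ℕ =>
            g (u * ((i : ℝ) + 2) ^ (-α))
              - ∫ x in ((i : ℝ) + 2)..((i : ℝ) + 3), g (u * x ^ (-α))) ∧
          |∑' i : ℕ, (g (u * ((i : ℝ) + 2) ^ (-α))
              - ∫ x in ((i : ℝ) + 2)..((i : ℝ) + 3), g (u * x ^ (-α)))|
            ≤ c * a * (if b = 0 then u else min u b⁻¹) ^ (1 + γ) := by
  refine ⟨max (1 / (1 + γ)) (Real.Gamma (1 + γ)),
    lt_max_of_lt_left (one_div_pos.2 (by linarith)), ?_⟩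
  intro g a b _ hb hg hg' u hu
  obtain ⟨hsum, hle⟩ := sum_integral_approx_general (m := 2) hγ hb
    (fun y hy => hg y hy.1) (fun y hy => hg' y hy.1)
    ((antitoneOn_mul_rpow_neg hαpos.le hu.le).mono (Ici_subset_Ioi.2 two_pos))
    ((mapsTo_mul_rpow_neg hαpos.le hu).mono_left (Ici_subset_Ici.2 one_le_two))
  simp only [add_assoc, two_add_one_eq_three] at hsum hle
  exact ⟨hsum.of_norm, (norm_tsum_le_tsum_norm hsum).trans hle⟩
end

section
/- Let c_i=i^{−α} with α=1/(τ−1), τ∈(3,4). For every real a>τ−1 and every b>0 there exists a constant c(a,b)>0 such that, as u→∞, Σ_{i=2}^∞ c_i^{a} e^{−b c_i u} = c(a,b) · u^{τ−a−1} · (1+o(1)). -/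
open MeasureTheory Filter

/-!
With `h = u ^ (-1/α)`, homogeneity turns each summand into `u ^ (-a) * f (h * (i + 2))`, where
`f y = (y ^ (-α)) ^ a * exp (-b * y ^ (-α))`. The series is therefore `u ^ (1/α - a)` times a
Riemann sum of mesh `h → 0` for `∫₀^∞ f`. Its sample points lie to the right of their cells, so
the integrable antitone majorant `min K (y ^ (-α * a))` of `f` dominates every Riemann sum and
dominated convergence applies. Substituting `z = y ^ (-α)` evaluates the limit as
`α⁻¹ * b ^ (1/α - a) * Γ(a - 1/α)`.
-/

open Set Asymptotics Topology

section RiemannSums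

variable {E : Type*} [NormedAddCommGroup E] [NormedSpace ℝ E]

lemma measurePreserving_natFloor :
    MeasurePreserving (Nat.floor : ℝ → ℕ) (volume.restrict (Ioi 0)) Measure.count := by
  refine ⟨Nat.measurable_floor, Measure.ext_of_singleton fun n => ?_⟩
  have fiber : Nat.floor ⁻¹' {n} ∩ Ici (0 : ℝ) = Ico (n : ℝ) (n + 1) := by
    ext t
    constructor
    · rintro ⟨hn, ht⟩
      exact (Nat.floor_eq_iff ht).1 hn
    · intro ht
      have ht₀ : 0 ≤ t := n.cast_nonneg.trans ht.1
      exact ⟨(Nat.floor_eq_iff ht₀).2 ht, ht₀⟩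
  have hn : MeasurableSet (Nat.floor ⁻¹' {n} : Set ℝ) :=
    Nat.measurable_floor (measurableSet_singleton n)
  rw [Measure.map_apply Nat.measurable_floor (measurableSet_singleton n),
    restrict_Ioi_eq_restrict_Ici, Measure.restrict_apply hn, fiber]
  simp

lemma setIntegral_Ioi_comp_natFloor [CompleteSpace E] {φ : ℕ → E}
    (hφ : IntegrableOn (fun t : ℝ => φ ⌊t⌋₊) (Ioi 0)) :
    ∫ t in Ioi (0 : ℝ), φ ⌊t⌋₊ = ∑' n, φ n := by
  have hφ_count : Integrable φ Measure.count :=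
    (measurePreserving_natFloor.integrable_comp .of_discrete).1 hφ
  rw [← integral_map Nat.measurable_floor.aemeasurable .of_discrete,
    measurePreserving_natFloor.map_eq, integral_countable hφ_count]
  simp [measureReal_def]

/-- The sample point of the cell of the grid `h ℕ` containing `y`: the cell `[h n, h (n + 1))` is
sampled at `h (n + c)`. -/
noncomputable def gridPoint (c h y : ℝ) : ℝ := h * (⌊h⁻¹ * y⌋₊ + c)

lemma le_gridPoint {c h : ℝ} (hc : 1 ≤ c) (hh : 0 < h) (y : ℝ) : y ≤ gridPoint c h y := by
  rw [gridPoint, ← inv_mul_le_iff₀ hh]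
  linarith [Nat.lt_floor_add_one (h⁻¹ * y)]

lemma gridPoint_le {h y : ℝ} (c : ℝ) (hh : 0 < h) (hy : 0 ≤ y) :
    gridPoint c h y ≤ y + c * h := by
  have hfloor : (⌊h⁻¹ * y⌋₊ : ℝ) ≤ h⁻¹ * y := Nat.floor_le (by positivity)
  calc gridPoint c h y ≤ h * (h⁻¹ * y + c) := by unfold gridPoint; gcongr
    _ = y + c * h := by field_simp

lemma tendsto_gridPoint {c y : ℝ} (hc : 1 ≤ c) (hy : 0 ≤ y) :
    Tendsto (fun h => gridPoint c h y) (𝓝[>] 0) (𝓝 y) := by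
  have upper : Tendsto (fun h : ℝ => y + c * h) (𝓝[>] 0) (𝓝 y) := by
    have : Continuous fun h : ℝ => y + c * h := by fun_prop
    simpa using (this.tendsto 0).mono_left nhdsWithin_le_nhds
  refine tendsto_of_tendsto_of_tendsto_of_le_of_le' tendsto_const_nhds upper ?_ ?_
  · filter_upwards [self_mem_nhdsWithin] with h hh using le_gridPoint hc hh y
  · filter_upwards [self_mem_nhdsWithin] with h hh using gridPoint_le c hh hy

lemma stronglyMeasurable_comp_gridPoint {X : Type*} [TopologicalSpace X] (f : ℝ → X) (c h : ℝ) :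
    StronglyMeasurable fun y => f (gridPoint c h y) := by
  have hfloor : Measurable fun y : ℝ => ⌊h⁻¹ * y⌋₊ := by fun_prop
  exact (StronglyMeasurable.of_discrete (f := fun n : ℕ => f (h * (n + c)))).comp_measurable hfloor

lemma setIntegral_Ioi_comp_gridPoint [CompleteSpace E] {f : ℝ → E} {c h : ℝ} (hh : 0 < h)
    (hf : IntegrableOn (fun y => f (gridPoint c h y)) (Ioi 0)) :
    ∫ y in Ioi 0, f (gridPoint c h y) = h • ∑' n : ℕ, f (h * (n + c)) := by
  set φ : ℕ → E := fun n => f (h * (n + c))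
  have hφ : IntegrableOn (fun t : ℝ => φ ⌊t⌋₊) (Ioi 0) := by
    simpa using (integrableOn_Ioi_comp_mul_left_iff (fun t : ℝ => φ ⌊t⌋₊) 0 (inv_pos.2 hh)).1 hf
  calc ∫ y in Ioi 0, f (gridPoint c h y) = h • ∫ t in Ioi (0 : ℝ), φ ⌊t⌋₊ := by
        exact (integral_comp_mul_left_Ioi (fun t : ℝ => φ ⌊t⌋₊) 0 (inv_pos.2 hh)).trans (by simp)
    _ = h • ∑' n, φ n := by rw [setIntegral_Ioi_comp_natFloor hφ]

theorem tendsto_smul_tsum_setIntegral_Ioi [CompleteSpace E] {f : ℝ → E} {G : ℝ → ℝ} {c : ℝ}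
    (hc : 1 ≤ c) (hf : ContinuousOn f (Ioi 0)) (hfG : ∀ y ∈ Ioi 0, ‖f y‖ ≤ G y)
    (hG_anti : AntitoneOn G (Ioi 0)) (hG : IntegrableOn G (Ioi 0)) :
    Tendsto (fun h : ℝ => h • ∑' n : ℕ, f (h * (n + c))) (𝓝[>] 0) (𝓝 (∫ y in Ioi 0, f y)) := by
  have dominated : ∀ h > 0, ∀ᵐ y ∂volume.restrict (Ioi 0), ‖f (gridPoint c h y)‖ ≤ G y := by
    intro h hh
    filter_upwards [ae_restrict_mem measurableSet_Ioi] with y hy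
    have hle := le_gridPoint hc hh y
    have hpos : gridPoint c h y ∈ Ioi 0 := lt_of_lt_of_le hy hle
    exact (hfG _ hpos).trans (hG_anti hy hpos hle)
  have hlim : Tendsto (fun h => ∫ y in Ioi 0, f (gridPoint c h y)) (𝓝[>] 0)
      (𝓝 (∫ y in Ioi 0, f y)) := by
    refine tendsto_integral_filter_of_dominated_convergence G
      (.of_forall fun h => (stronglyMeasurable_comp_gridPoint f c h).aestronglyMeasurable) ?_ hG ?_
    · filter_upwards [self_mem_nhdsWithin] with h hh using dominated h hh
    · filter_upwards [ae_restrict_mem measurableSet_Ioi] with y hy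
      exact (hf.continuousAt (Ioi_mem_nhds hy)).tendsto.comp (tendsto_gridPoint hc (le_of_lt hy))
  refine hlim.congr' ?_
  filter_upwards [self_mem_nhdsWithin] with h hh
  exact setIntegral_Ioi_comp_gridPoint hh
    (hG.mono' (stronglyMeasurable_comp_gridPoint f c h).aestronglyMeasurable (dominated h hh))

end RiemannSums

lemma exists_eventually_eq_mul_one_add {ι 𝕜 : Type*} [NormedField 𝕜] {l : Filter ι} {f g : ι → 𝕜}
    (h : f ~[l] g) : ∃ err : ι → 𝕜, Tendsto err l (𝓝 0) ∧ ∀ᶠ x in l, f x = g x * (1 + err x) := by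
  obtain ⟨φ, hφ, hfg⟩ := h.exists_eq_mul
  refine ⟨fun x => φ x - 1, by simpa using hφ.sub_const 1, ?_⟩
  filter_upwards [hfg] with x hx
  simp [hx, mul_comm]

lemma integrableOn_Ioi_min_const_rpow {K s : ℝ} (hK : 0 ≤ K) (hs : s < -1) :
    IntegrableOn (fun y : ℝ => min K (y ^ s)) (Ioi 0) := by
  have hmeas : Measurable fun y : ℝ => min K (y ^ s) := by fun_prop
  have hnorm : ∀ y > 0, ‖min K (y ^ s)‖ = min K (y ^ s) := fun y hy =>
    Real.norm_of_nonneg (le_min hK (Real.rpow_nonneg (le_of_lt hy) s))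
  rw [← Ioc_union_Ioi_eq_Ioi zero_le_one]
  refine IntegrableOn.union ?_ ?_
  · refine Integrable.mono' (g := fun _ => K) (by simp) hmeas.aestronglyMeasurable ?_
    filter_upwards [ae_restrict_mem measurableSet_Ioc] with y hy
    exact (hnorm y hy.1).trans_le (min_le_left _ _)
  · refine (integrableOn_Ioi_rpow_of_lt hs one_pos).mono' hmeas.aestronglyMeasurable ?_
    filter_upwards [ae_restrict_mem measurableSet_Ioi] with y hy
    exact (hnorm y (one_pos.trans hy)).trans_le (min_le_right _ _)

lemma antitoneOn_min_const_rpow (K : ℝ) {s : ℝ} (hs : s ≤ 0) :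
    AntitoneOn (fun y : ℝ => min K (y ^ s)) (Ioi 0) :=
  antitoneOn_const.min fun _ hx _ _ hxy => Real.rpow_le_rpow_of_nonpos hx hxy hs

lemma rpow_mul_exp_neg_mul_le {a b z : ℝ} (ha : 0 ≤ a) (hb : 0 < b) (hz : 0 ≤ z) :
    z ^ a * Real.exp (-b * z) ≤ (a / b) ^ a := by
  have h := ProbabilityTheory.rpow_abs_le_mul_exp_abs z ha hb.ne'
  rw [abs_of_nonneg hz, abs_of_pos hb] at h
  rwa [neg_mul, Real.exp_neg, ← div_eq_mul_inv, div_le_iff₀ (Real.exp_pos _)]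

/-- The limiting profile of the summands: after rescaling, the series is a Riemann sum of this
function of `y`. -/
noncomputable def rpowExpProfile (α a b y : ℝ) : ℝ := (y ^ (-α)) ^ a * Real.exp (-b * y ^ (-α))

namespace rpowExpProfile

variable {α a b : ℝ}

lemma continuousOn (α a b : ℝ) : ContinuousOn (rpowExpProfile α a b) (Ioi 0) := by
  intro y hy
  have hne : y ≠ 0 := ne_of_gt hy
  have hpow : ContinuousAt (fun y : ℝ => y ^ (-α)) y :=
    Real.continuousAt_rpow_const _ _ (.inl hne)
  have hpow_ne : y ^ (-α) ≠ 0 := (Real.rpow_pos_of_pos hy _).ne'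
  exact ((hpow.rpow_const (.inl hpow_ne)).mul (hpow.const_mul (-b)).rexp).continuousWithinAt

lemma norm_le (ha : 0 ≤ a) (hb : 0 < b) {y : ℝ} (hy : 0 < y) :
    ‖rpowExpProfile α a b y‖ ≤ min ((a / b) ^ a) (y ^ (-α * a)) := by
  have hz : 0 ≤ y ^ (-α) := by positivity
  rw [rpowExpProfile, Real.norm_of_nonneg (by positivity)]
  refine le_min (rpow_mul_exp_neg_mul_le ha hb hz) ?_
  rw [Real.rpow_mul hy.le]
  refine mul_le_of_le_one_right (by positivity) (Real.exp_le_one_iff.2 ?_)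
  exact mul_nonpos_of_nonpos_of_nonneg (neg_nonpos.2 hb.le) hz

lemma mul_left {h x : ℝ} (hh : 0 ≤ h) (hx : 0 ≤ x) :
    rpowExpProfile α a b (h * x) =
      (h ^ (-α)) ^ a * ((x ^ (-α)) ^ a * Real.exp (-b * x ^ (-α) * h ^ (-α))) := by
  rw [rpowExpProfile, Real.mul_rpow hh hx, Real.mul_rpow (by positivity) (by positivity)]
  ring_nf

lemma setIntegral_Ioi (hα : 0 < α) (ha : α⁻¹ < a) (hb : 0 < b) :
    ∫ y in Ioi 0, rpowExpProfile α a b y = α⁻¹ * b ^ (α⁻¹ - a) * Real.Gamma (a - α⁻¹) := by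
  have hα' : 0 < α⁻¹ := inv_pos.2 hα
  have substituted : ∀ z ∈ Ioi (0 : ℝ),
      (|-α⁻¹| * z ^ (-α⁻¹ - 1)) • rpowExpProfile α a b (z ^ (-α⁻¹)) =
        α⁻¹ * (z ^ (a - α⁻¹ - 1) * Real.exp (-(b * z))) := by
    intro z hz
    have hpow : (z ^ (-α⁻¹)) ^ (-α) = z := by
      rw [← Real.rpow_mul (le_of_lt hz), neg_mul_neg, inv_mul_cancel₀ hα.ne', Real.rpow_one]
    have hexp : z ^ (a - α⁻¹ - 1) = z ^ (-α⁻¹ - 1) * z ^ a := by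
      rw [← Real.rpow_add hz]
      ring_nf
    rw [rpowExpProfile, hpow, hexp, abs_neg, abs_of_pos hα', smul_eq_mul, neg_mul]
    ring
  calc ∫ y in Ioi 0, rpowExpProfile α a b y
      = ∫ z in Ioi 0, α⁻¹ * (z ^ (a - α⁻¹ - 1) * Real.exp (-(b * z))) := by
        rw [← integral_comp_rpow_Ioi _ (neg_ne_zero.2 hα'.ne')]
        exact setIntegral_congr_fun measurableSet_Ioi substituted
    _ = α⁻¹ * ((1 / b) ^ (a - α⁻¹) * Real.Gamma (a - α⁻¹)) := by
        rw [integral_const_mul, Real.integral_rpow_mul_exp_neg_mul_Ioi (sub_pos.2 ha) hb]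
    _ = α⁻¹ * b ^ (α⁻¹ - a) * Real.Gamma (a - α⁻¹) := by
        rw [one_div, Real.inv_rpow hb.le, ← Real.rpow_neg hb.le, neg_sub, mul_assoc]

lemma tendsto_mul_tsum {c : ℝ} (hc : 1 ≤ c) (hα : 0 < α) (ha : α⁻¹ < a) (hb : 0 < b) :
    Tendsto (fun h : ℝ => h * ∑' i : ℕ, rpowExpProfile α a b (h * (i + c))) (𝓝[>] 0)
      (𝓝 (α⁻¹ * b ^ (α⁻¹ - a) * Real.Gamma (a - α⁻¹))) := by
  have ha₀ : 0 < a := (inv_pos.2 hα).trans ha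
  have hexponent : -α * a < -1 := by
    have : 1 < α * a := (inv_lt_iff_one_lt_mul₀' hα).1 ha
    linarith
  rw [← setIntegral_Ioi hα ha hb]
  exact tendsto_smul_tsum_setIntegral_Ioi hc (continuousOn α a b) (fun y hy => norm_le ha₀.le hb hy)
    (antitoneOn_min_const_rpow _ (by linarith))
    (integrableOn_Ioi_min_const_rpow (by positivity) hexponent)

lemma rpow_mul_tsum {c u : ℝ} (hc : 0 ≤ c) (hα : α ≠ 0) (hu : 0 < u) :
    u ^ (α⁻¹ - a) * (u ^ (-α⁻¹) * ∑' i : ℕ, rpowExpProfile α a b (u ^ (-α⁻¹) * (i + c))) =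
      ∑' i : ℕ, (((i : ℝ) + c) ^ (-α)) ^ a * Real.exp (-b * ((i : ℝ) + c) ^ (-α) * u) := by
  have hpow : (u ^ (-α⁻¹)) ^ (-α) = u := by
    rw [← Real.rpow_mul hu.le, neg_mul_neg, inv_mul_cancel₀ hα, Real.rpow_one]
  have hcancel : u ^ (α⁻¹ - a) * u ^ (-α⁻¹) * u ^ a = 1 := by
    rw [← Real.rpow_add hu, ← Real.rpow_add hu, ← Real.rpow_zero u]
    ring_nf
  have hscale (i : ℕ) := mul_left (α := α) (a := a) (b := b)
    (Real.rpow_nonneg hu.le (-α⁻¹)) (add_nonneg i.cast_nonneg hc)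
  simp only [hscale, hpow]
  rw [tsum_mul_left, ← mul_assoc, ← mul_assoc, hcancel, one_mul]

end rpowExpProfile

theorem sum_c_pow_exp_asymptotics_general
    {τ α a b c : ℝ} (hτ : 1 < τ) (hα : α = 1 / (τ - 1)) (ha : τ - 1 < a) (hb : 0 < b)
    (hc : 1 ≤ c) :
    (fun u : ℝ => ∑' i : ℕ, (((i : ℝ) + c) ^ (-α)) ^ a * Real.exp (-b * ((i : ℝ) + c) ^ (-α) * u))
      ~[atTop] fun u =>
        (τ - 1) * b ^ (τ - 1 - a) * Real.Gamma (a - (τ - 1)) * u ^ (τ - a - 1) := by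
  have hs : 0 < τ - 1 := sub_pos.2 hτ
  have hα₀ : 0 < α := hα ▸ one_div_pos.2 hs
  obtain rfl : τ = α⁻¹ + 1 := by rw [hα]; simp
  simp only [add_sub_cancel_right] at ha hs ⊢
  have mesh : Tendsto (fun u : ℝ => u ^ (-α⁻¹)) atTop (𝓝[>] 0) := by
    refine tendsto_nhdsWithin_iff.2 ⟨tendsto_rpow_neg_atTop hs, ?_⟩
    filter_upwards [eventually_gt_atTop 0] with u hu using Real.rpow_pos_of_pos hu _
  have hC : α⁻¹ * b ^ (α⁻¹ - a) * Real.Gamma (a - α⁻¹) ≠ 0 := by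
    have := Real.Gamma_pos_of_pos (sub_pos.2 ha)
    positivity
  have riemann := (isEquivalent_const_iff_tendsto hC).2
    ((rpowExpProfile.tendsto_mul_tsum hc hα₀ ha hb).comp mesh)
  have scaled := (IsEquivalent.refl (u := fun u : ℝ => u ^ (α⁻¹ - a))).mul riemann
  refine (scaled.congr_left ?_).congr_right (.of_eq ?_)
  · filter_upwards [eventually_gt_atTop 0] with u hu
    exact rpowExpProfile.rpow_mul_tsum (zero_le_one.trans hc) hα₀.ne' hu
  · ext u
    simp only [Pi.mul_apply, Function.const_apply]
    ring_nf

/-- Corollary 3.3, replacing sums by integrals in general.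
Let `c_i = i^{-α}` with `α = 1/(τ-1)`, `τ ∈ (3,4)`. For every `a > τ-1` and `b > 0` there is
a constant `c(a,b) > 0` such that, as `u → ∞`,
`Σ_{i=2}^∞ c_i^a e^{-b c_i u} = c(a,b) u^{τ-a-1} (1+o(1))`. -/
theorem sum_c_pow_exp_asymptotics
    (τ α : ℝ) (hτ : τ ∈ Set.Ioo (3 : ℝ) 4) (hα : α = 1 / (τ - 1))
    (a b : ℝ) (ha : τ - 1 < a) (hb : 0 < b) :
    ∃ C : ℝ, 0 < C ∧ ∃ err : ℝ → ℝ, Tendsto err atTop (nhds 0) ∧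
      ∀ᶠ u : ℝ in atTop,
        (∑' i : ℕ, (((i : ℝ) + 2) ^ (-α)) ^ a * Real.exp (-b * ((i : ℝ) + 2) ^ (-α) * u))
          = C * u ^ (τ - a - 1) * (1 + err u) := by
  have hτ₁ : 1 < τ := by linarith [hτ.1]
  exact ⟨_, mul_pos (mul_pos (sub_pos.2 hτ₁) (Real.rpow_pos_of_pos hb _))
      (Real.Gamma_pos_of_pos (sub_pos.2 ha)),
    exists_eventually_eq_mul_one_add (sum_c_pow_exp_asymptotics_general hτ₁ hα ha hb one_le_two)⟩
end

section
/- The function Λ(θ) = ∫_0^∞ f(x;θ)dx is twice differentiable with Λ''(θ) > 0 for all θ∈ℝ, satisfies Λ(0)=0, Λ'(0) = ∫_0^∞ x^{−α}[1 − x^{−α} − e^{−x^{−α}}]dx < 0, and Λ'(θ)→∞ as θ→∞. Consequently there is a unique θ*>0 solving Λ'(θ*)=0; θ* is the unique minimizer of Λ over ℝ, and I := −Λ(θ*) > 0. -/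
open MeasureTheory Filter

open scoped Topology

/-! The integrand `f(x;θ)` is the cumulant generating function at `θ` of `u (𝟙{T ≤ 1} - u)`, where
`u = x^{-α}` and `T` is exponential of rate `u`: a jump of size `u` at rate `u`, counted once and
compensated by its intensity. Its first and second `θ`-derivatives are the mean and the variance of
the tilted law. On bounded sets of `θ` the variance is at most a multiple of `min (u², u³)`, which
is integrable exactly because `1/3 < α < 1/2`, so that `Λ` can be differentiated twice under the
integral sign and `Λ'' > 0`. As `θ` increases from `0` to `∞` the tilted mean increases by
`u e^{-u}`, whose integral diverges together with that of `u`, so `Λ'(θ) → ∞` by Fatou's lemma. -/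

section Parametric

variable {X E : Type*} [MeasurableSpace X] {μ : Measure X} [NormedAddCommGroup E]

/-- Local domination of a family of functions depending on a real parameter: on every bounded set
of parameters the family is dominated by a single integrable function. This is the hypothesis under
which integrals may be differentiated in the parameter. -/
def LocallyDominated (F : ℝ → X → E) (μ : Measure X) : Prop :=
  ∀ M : ℝ, ∃ b : X → ℝ, Integrable b μ ∧ ∀ᵐ x ∂μ, ∀ θ : ℝ, |θ| ≤ M → ‖F θ x‖ ≤ b x

namespace LocallyDominated

variable {F F' : ℝ → X → E}

lemma integrable (h : LocallyDominated F μ) {θ : ℝ} (hmeas : AEStronglyMeasurable (F θ) μ) :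
    Integrable (F θ) μ := by
  obtain ⟨b, hb, hFb⟩ := h |θ|
  exact hb.mono' hmeas (hFb.mono fun x hx ↦ hx θ le_rfl)

variable [NormedSpace ℝ E]

lemma of_hasDerivAt (h' : LocallyDominated F' μ) (h0 : Integrable (F 0) μ)
    (hderiv : ∀ᵐ x ∂μ, ∀ θ, HasDerivAt (F · x) (F' θ x) θ) : LocallyDominated F μ := by
  intro M
  obtain ⟨b, hb, hF'b⟩ := h' M
  refine ⟨fun x ↦ ‖F 0 x‖ + b x * M, h0.norm.add (hb.mul_const M), ?_⟩
  filter_upwards [hF'b, hderiv] with x hbound hx θ hθ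
  have hb0 : 0 ≤ b x := (norm_nonneg _).trans (hbound θ hθ)
  have hmvt : ‖F θ x - F 0 x‖ ≤ b x * ‖θ - 0‖ :=
    (convex_Icc (-M) M).norm_image_sub_le_of_norm_hasDerivWithin_le
      (fun t _ ↦ (hx t).hasDerivWithinAt) (fun t ht ↦ hbound t (abs_le.2 ht))
      (abs_le.1 (abs_zero.trans_le ((abs_nonneg θ).trans hθ))) (abs_le.1 hθ)
  calc ‖F θ x‖ ≤ ‖F 0 x‖ + ‖F θ x - F 0 x‖ := norm_le_norm_add_norm_sub' _ _
    _ ≤ ‖F 0 x‖ + b x * |θ| := by simpa using hmvt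
    _ ≤ ‖F 0 x‖ + b x * M := by gcongr

lemma hasDerivAt_integral (h : LocallyDominated F μ) (h' : LocallyDominated F' μ)
    (hmeas : ∀ θ, AEStronglyMeasurable (F θ) μ) (hmeas' : ∀ θ, AEStronglyMeasurable (F' θ) μ)
    (hderiv : ∀ᵐ x ∂μ, ∀ θ, HasDerivAt (F · x) (F' θ x) θ) (θ : ℝ) :
    HasDerivAt (fun t ↦ ∫ x, F t x ∂μ) (∫ x, F' θ x ∂μ) θ := by
  obtain ⟨b, hb, hF'b⟩ := h' (|θ| + 1)
  have hnhds : {t : ℝ | |t| ≤ |θ| + 1} ∈ 𝓝 θ :=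
    (continuous_abs.tendsto θ).eventually_le_const (lt_add_one |θ|)
  exact (hasDerivAt_integral_of_dominated_loc_of_deriv_le hnhds (.of_forall hmeas)
    (h.integrable (hmeas θ)) (hmeas' θ) hF'b hb (hderiv.mono fun x hx t _ ↦ hx t)).2

end LocallyDominated

lemma tendsto_integral_norm_atTop_of_not_integrable {ι : Type*} {l : Filter ι}
    [l.IsCountablyGenerated] {F : ι → X → E} {G : X → E} (hF : ∀ i, Integrable (F i) μ)
    (hlim : ∀ᵐ x ∂μ, Tendsto (F · x) l (𝓝 (G x))) (hG : ¬ Integrable G μ) :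
    Tendsto (fun i ↦ ∫ x, ‖F i x‖ ∂μ) l atTop := by
  rcases l.eq_or_neBot with rfl | _
  · exact tendsto_bot
  have hGmeas : AEStronglyMeasurable G μ :=
    aestronglyMeasurable_of_tendsto_ae l (fun i ↦ (hF i).1) hlim
  have hGtop : ∫⁻ x, ‖G x‖ₑ ∂μ = ⊤ := by
    by_contra hne
    exact hG ⟨hGmeas, Ne.lt_top hne⟩
  have hfatou : ⊤ ≤ liminf (fun i ↦ ∫⁻ x, ‖F i x‖ₑ ∂μ) l := calc
    ⊤ = ∫⁻ x, liminf (fun i ↦ ‖F i x‖ₑ) l ∂μ := by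
      rw [← hGtop]
      exact lintegral_congr_ae (hlim.mono fun x hx ↦ hx.enorm.liminf_eq.symm)
    _ ≤ _ := lintegral_liminf_le' fun i ↦ (hF i).1.enorm
  rw [← ENNReal.tendsto_ofReal_nhds_top]
  simp only [ofReal_integral_norm_eq_lintegral_enorm (hF _)]
  exact tendsto_of_le_liminf_of_limsup_le hfatou le_top

lemma integral_comp_pos {u : X → ℝ} {h : ℝ → ℝ} (hu : 0 ≤ᵐ[μ] u) (hu_ne : ¬ u =ᵐ[μ] 0)
    (h_zero : 0 ≤ h 0) (h_pos : ∀ v, 0 < v → 0 < h v) (hint : Integrable (fun x ↦ h (u x)) μ) :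
    0 < ∫ x, h (u x) ∂μ := by
  have hnonneg : 0 ≤ᵐ[μ] fun x ↦ h (u x) := by
    filter_upwards [hu] with x hx
    rcases hx.eq_or_lt with h0 | hlt
    · exact h0 ▸ h_zero
    · exact (h_pos _ hlt).le
  refine (integral_nonneg_of_ae hnonneg).lt_of_ne' fun h0 ↦ hu_ne ?_
  filter_upwards [hu, (integral_eq_zero_iff_of_nonneg_ae hnonneg hint).1 h0] with x hx hhx
  by_contra hne
  exact (h_pos _ (lt_of_le_of_ne hx (Ne.symm hne))).ne' hhx

end Parametric

lemma integrableOn_Ioi_min_rpow {a b : ℝ} (ha : -1 < a) (hb : b < -1) :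
    IntegrableOn (fun x : ℝ ↦ min (x ^ a) (x ^ b)) (Set.Ioi 0) := by
  have hmeas : Measurable fun x : ℝ ↦ min (x ^ a) (x ^ b) := by fun_prop
  have hnonneg {x : ℝ} (hx : 0 < x) : 0 ≤ min (x ^ a) (x ^ b) := by positivity
  rw [← Set.Ioc_union_Ioi_eq_Ioi (zero_le_one' ℝ)]
  refine IntegrableOn.union ?_ ?_
  · have hxa : IntegrableOn (fun x : ℝ ↦ x ^ a) (Set.Ioc 0 1) :=
      (intervalIntegrable_iff_integrableOn_Ioc_of_le zero_le_one).1
        (intervalIntegral.intervalIntegrable_rpow' ha)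
    refine hxa.mono' hmeas.aestronglyMeasurable ?_
    filter_upwards [ae_restrict_mem measurableSet_Ioc] with x hx
    exact (Real.norm_of_nonneg (hnonneg hx.1)).trans_le (min_le_left _ _)
  · refine (integrableOn_Ioi_rpow_of_lt hb one_pos).mono' hmeas.aestronglyMeasurable ?_
    filter_upwards [ae_restrict_mem measurableSet_Ioi] with x hx
    exact (Real.norm_of_nonneg (hnonneg (one_pos.trans hx))).trans_le (min_le_right _ _)

section RealAnalysis

lemma lt_of_strictMono_deriv_of_deriv_eq_zero {f : ℝ → ℝ} (hf : Differentiable ℝ f)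
    (hmono : StrictMono (deriv f)) {a b : ℝ} (ha : deriv f a = 0) (hab : b ≠ a) : f a < f b := by
  have hconv : StrictConvexOn ℝ Set.univ f := hmono.strictConvexOn_univ_of_deriv hf.continuous
  have hright : derivWithin f (Set.Ioi a) a = 0 := by
    rw [(hf a).derivWithin (uniqueDiffWithinAt_Ioi a), ha]
  have hmin : IsMinOn f Set.univ a :=
    hconv.convexOn.isMinOn_of_rightDeriv_eq_zero (by simp) hright
  refine (hmin (Set.mem_univ b)).lt_of_ne fun heq ↦ hab ?_
  exact hconv.eq_of_isMinOn (fun x hx ↦ heq ▸ hmin hx) hmin (Set.mem_univ b) (Set.mem_univ a)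

lemma existsUnique_pos_eq_zero {g : ℝ → ℝ} (hcont : Continuous g) (hmono : StrictMono g)
    (h0 : g 0 < 0) (htop : Tendsto g atTop atTop) : ∃! x, 0 < x ∧ g x = 0 := by
  obtain ⟨M, hM0, hM⟩ := ((eventually_ge_atTop 0).and (htop.eventually_ge_atTop 0)).exists
  obtain ⟨x, -, hx⟩ := intermediate_value_Icc hM0 hcont.continuousOn ⟨h0.le, hM⟩
  exact ⟨x, ⟨hmono.lt_iff_lt.1 (h0.trans_eq hx.symm), hx⟩,
    fun y hy ↦ hmono.injective (hy.2.trans hx.symm)⟩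

end RealAnalysis

section Bernoulli

variable {p s : ℝ}

/-- The cumulant generating function at `s` of the Bernoulli law with success probability `p`. -/
noncomputable def bernoulliCgf (p s : ℝ) : ℝ := Real.log (1 - p + p * Real.exp s)

/-- The success probability of the Bernoulli law with success probability `p` after exponential
tilting by `s`; it is the mean of the tilted law. -/
noncomputable def bernoulliTilt (p s : ℝ) : ℝ := p * Real.exp s / (1 - p + p * Real.exp s)

lemma bernoulliCgf_zero_right (p : ℝ) : bernoulliCgf p 0 = 0 := by simp [bernoulliCgf]

lemma bernoulliTilt_zero_right (p : ℝ) : bernoulliTilt p 0 = p := by simp [bernoulliTilt]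

lemma one_sub_add_mul_exp_pos (hp : p ∈ Set.Icc 0 1) (s : ℝ) : 0 < 1 - p + p * Real.exp s :=
  convex_Ioi (0 : ℝ) one_pos (Real.exp_pos s) (sub_nonneg.2 hp.2) hp.1 (sub_add_cancel 1 p)
    |>.trans_eq (by simp)

lemma bernoulliCgf_eq_log_add (hp : p ∈ Set.Icc 0 1) (s : ℝ) :
    bernoulliCgf p s = Real.log (1 + (1 - p) * (Real.exp (-s) - 1)) + s := by
  have hfactor : 1 - p + p * Real.exp s
      = (1 + (1 - p) * (Real.exp (-s) - 1)) * Real.exp s := by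
    have hinv : Real.exp (-s) * Real.exp s = 1 := by
      rw [← Real.exp_add, neg_add_cancel, Real.exp_zero]
    linear_combination -(1 - p) * hinv
  have hpos : 0 < 1 + (1 - p) * (Real.exp (-s) - 1) :=
    pos_of_mul_pos_left (hfactor ▸ one_sub_add_mul_exp_pos hp s) (Real.exp_pos s).le
  rw [bernoulliCgf, hfactor, Real.log_mul hpos.ne' (Real.exp_ne_zero s), Real.log_exp]

lemma bernoulliTilt_nonneg (hp : p ∈ Set.Icc 0 1) (s : ℝ) : 0 ≤ bernoulliTilt p s :=
  div_nonneg (mul_nonneg hp.1 (Real.exp_pos s).le) (one_sub_add_mul_exp_pos hp s).le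

lemma bernoulliTilt_le_one (hp : p ∈ Set.Icc 0 1) (s : ℝ) : bernoulliTilt p s ≤ 1 :=
  div_le_one_of_le₀ (by linarith [hp.2]) (one_sub_add_mul_exp_pos hp s).le

lemma bernoulliTilt_mem_Ioo (hp : p ∈ Set.Ioo 0 1) (s : ℝ) : bernoulliTilt p s ∈ Set.Ioo 0 1 := by
  have hden := one_sub_add_mul_exp_pos (Set.Ioo_subset_Icc_self hp) s
  exact ⟨div_pos (mul_pos hp.1 (Real.exp_pos s)) hden, (div_lt_one hden).2 (by linarith [hp.2])⟩

lemma bernoulliTilt_le_mul_exp_abs (hp : p ∈ Set.Icc 0 1) (s : ℝ) :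
    bernoulliTilt p s ≤ p * Real.exp |s| := by
  have hden : Real.exp (s - |s|) ≤ 1 - p + p * Real.exp s := calc
    Real.exp (s - |s|) = (1 - p) * Real.exp (s - |s|) + p * Real.exp (s - |s|) := by ring
    _ ≤ (1 - p) * 1 + p * Real.exp s := by
      gcongr
      · exact sub_nonneg.2 hp.2
      · exact Real.exp_le_one_iff.2 (sub_nonpos.2 (le_abs_self s))
      · exact hp.1
      · linarith [abs_nonneg s]
    _ = 1 - p + p * Real.exp s := by ring
  rw [bernoulliTilt, div_le_iff₀ (one_sub_add_mul_exp_pos hp s)]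
  calc p * Real.exp s = p * Real.exp |s| * Real.exp (s - |s|) := by
        rw [mul_assoc, ← Real.exp_add, add_sub_cancel]
    _ ≤ _ := mul_le_mul_of_nonneg_left hden (mul_nonneg hp.1 (Real.exp_pos _).le)

lemma hasDerivAt_bernoulliCgf (hp : p ∈ Set.Icc 0 1) (s : ℝ) :
    HasDerivAt (bernoulliCgf p) (bernoulliTilt p s) s :=
  (((Real.hasDerivAt_exp s).const_mul p).const_add (1 - p)).log (one_sub_add_mul_exp_pos hp s).ne'

lemma hasDerivAt_bernoulliTilt (hp : p ∈ Set.Icc 0 1) (s : ℝ) :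
    HasDerivAt (bernoulliTilt p) (bernoulliTilt p s * (1 - bernoulliTilt p s)) s := by
  have hden := (one_sub_add_mul_exp_pos hp s).ne'
  have hnum := (Real.hasDerivAt_exp s).const_mul p
  refine (hnum.div (hnum.const_add (1 - p)) hden).congr_deriv ?_
  rw [bernoulliTilt]
  field_simp

lemma tendsto_bernoulliTilt_atTop (hp : 0 < p) : Tendsto (bernoulliTilt p) atTop (𝓝 1) := by
  have heq : bernoulliTilt p = fun s ↦ p / ((1 - p) * Real.exp (-s) + p) := by
    funext s
    rw [bernoulliTilt, Real.exp_neg]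
    field_simp
  have hden : Tendsto (fun s ↦ (1 - p) * Real.exp (-s) + p) atTop (𝓝 p) := by
    simpa using (Real.tendsto_exp_neg_atTop_nhds_zero.const_mul (1 - p)).add_const p
  have hlim : Tendsto (fun s ↦ p / ((1 - p) * Real.exp (-s) + p)) atTop (𝓝 (p / p)) :=
    tendsto_const_nhds.div hden hp.ne'
  rwa [div_self hp.ne', ← heq] at hlim

end Bernoulli

section Jump

variable {u : ℝ}

/-- The probability that an exponential clock of rate `u` rings before time `1`. -/
noncomputable def jumpProb (u : ℝ) : ℝ := 1 - Real.exp (-u)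

/-- The cumulant generating function at `θ` of `u * (B - u)`, where `B` is Bernoulli with success
probability `jumpProb u`: the contribution to `Λ(θ)` of a compensated jump of size `u`. -/
noncomputable def jumpCgf (u θ : ℝ) : ℝ := bernoulliCgf (jumpProb u) (θ * u) - θ * u ^ 2

/-- The mean of a compensated jump of size `u` under the law tilted by `θ`. -/
noncomputable def jumpMean (u θ : ℝ) : ℝ := u * bernoulliTilt (jumpProb u) (θ * u) - u ^ 2

/-- The variance of a compensated jump of size `u` under the law tilted by `θ`. -/
noncomputable def jumpVariance (u θ : ℝ) : ℝ :=
  u ^ 2 * (bernoulliTilt (jumpProb u) (θ * u) * (1 - bernoulliTilt (jumpProb u) (θ * u)))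

lemma measurable_jumpCgf (θ : ℝ) : Measurable (jumpCgf · θ) := by
  unfold jumpCgf bernoulliCgf jumpProb
  fun_prop

lemma measurable_jumpMean (θ : ℝ) : Measurable (jumpMean · θ) := by
  unfold jumpMean bernoulliTilt jumpProb
  fun_prop

lemma measurable_jumpVariance (θ : ℝ) : Measurable (jumpVariance · θ) := by
  unfold jumpVariance bernoulliTilt jumpProb
  fun_prop

lemma jumpProb_mem_Icc (hu : 0 ≤ u) : jumpProb u ∈ Set.Icc 0 1 :=
  ⟨sub_nonneg.2 (Real.exp_le_one_iff.2 (neg_nonpos.2 hu)), sub_le_self 1 (Real.exp_pos _).le⟩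

lemma jumpProb_mem_Ioo (hu : 0 < u) : jumpProb u ∈ Set.Ioo 0 1 :=
  ⟨sub_pos.2 (Real.exp_lt_one_iff.2 (neg_lt_zero.2 hu)), sub_lt_self 1 (Real.exp_pos _)⟩

lemma jumpProb_le_self (u : ℝ) : jumpProb u ≤ u := by
  linarith [Real.one_sub_le_exp_neg u, jumpProb.eq_1 u]

lemma jumpCgf_eq (hu : 0 ≤ u) (θ : ℝ) :
    jumpCgf u θ = Real.log (1 + Real.exp (-u) * (Real.exp (-θ * u) - 1)) + θ * u - θ * u ^ 2 := by
  rw [jumpCgf, bernoulliCgf_eq_log_add (jumpProb_mem_Icc hu), jumpProb, sub_sub_cancel, neg_mul]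

lemma jumpCgf_zero_right (u : ℝ) : jumpCgf u 0 = 0 := by simp [jumpCgf, bernoulliCgf_zero_right]

lemma hasDerivAt_jumpCgf (hu : 0 ≤ u) (θ : ℝ) : HasDerivAt (jumpCgf u) (jumpMean u θ) θ := by
  have htilt := (hasDerivAt_bernoulliCgf (jumpProb_mem_Icc hu) (θ * u)).comp θ
    (hasDerivAt_mul_const u)
  exact (htilt.sub (hasDerivAt_mul_const (u ^ 2))).congr_deriv (by rw [jumpMean, mul_comm u])

lemma hasDerivAt_jumpMean (hu : 0 ≤ u) (θ : ℝ) : HasDerivAt (jumpMean u) (jumpVariance u θ) θ := by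
  have htilt := (hasDerivAt_bernoulliTilt (jumpProb_mem_Icc hu) (θ * u)).comp θ
    (hasDerivAt_mul_const u)
  exact ((htilt.const_mul u).sub_const (u ^ 2)).congr_deriv (by rw [jumpVariance]; ring)

lemma jumpMean_zero_right (u : ℝ) : jumpMean u 0 = u * (1 - u - Real.exp (-u)) := by
  rw [jumpMean, zero_mul, bernoulliTilt_zero_right, jumpProb]
  ring

lemma jumpMean_zero_right_neg (hu : 0 < u) : jumpMean u 0 < 0 := by
  rw [jumpMean_zero_right]
  have hexp := Real.add_one_lt_exp (neg_ne_zero.2 hu.ne')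
  exact mul_neg_of_pos_of_neg hu (by linarith)

lemma exp_neg_le_one_sub_add_sq (hu : 0 ≤ u) : Real.exp (-u) ≤ 1 - u + u ^ 2 := by
  rw [Real.exp_neg, inv_le_iff_one_le_mul₀' (Real.exp_pos u)]
  calc 1 ≤ (1 + u + u ^ 2 / 2) * (1 - u + u ^ 2) := by nlinarith [pow_nonneg hu 3, pow_nonneg hu 4]
    _ ≤ Real.exp u * (1 - u + u ^ 2) := by
      gcongr
      · nlinarith [sq_nonneg (u - 1)]
      · exact Real.quadratic_le_exp_of_nonneg hu

lemma abs_jumpMean_zero_right_le (hu : 0 ≤ u) : |jumpMean u 0| ≤ min (u ^ 2) (u ^ 3) := by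
  have hlower := Real.one_sub_le_exp_neg u
  have hupper := exp_neg_le_one_sub_add_sq hu
  have hone := Real.exp_le_one_iff.2 (neg_nonpos.2 hu)
  rw [jumpMean_zero_right, abs_of_nonpos (mul_nonpos_of_nonneg_of_nonpos hu (by linarith))]
  exact le_min (by nlinarith) (by nlinarith)

lemma jumpVariance_nonneg (hu : 0 ≤ u) (θ : ℝ) : 0 ≤ jumpVariance u θ :=
  mul_nonneg (sq_nonneg u) (mul_nonneg (bernoulliTilt_nonneg (jumpProb_mem_Icc hu) _)
    (sub_nonneg.2 (bernoulliTilt_le_one (jumpProb_mem_Icc hu) _)))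

lemma jumpVariance_pos (hu : 0 < u) (θ : ℝ) : 0 < jumpVariance u θ := by
  have htilt := bernoulliTilt_mem_Ioo (jumpProb_mem_Ioo hu) (θ * u)
  exact mul_pos (sq_pos_of_pos hu) (mul_pos htilt.1 (sub_pos.2 htilt.2))

lemma jumpVariance_le_sq_mul_tilt (hu : 0 ≤ u) (θ : ℝ) :
    jumpVariance u θ ≤ u ^ 2 * bernoulliTilt (jumpProb u) (θ * u) := by
  have htilt := bernoulliTilt_nonneg (jumpProb_mem_Icc hu) (θ * u)
  exact mul_le_mul_of_nonneg_left (mul_le_of_le_one_right htilt (by linarith)) (sq_nonneg u)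

lemma jumpVariance_le_sq (hu : 0 ≤ u) (θ : ℝ) : jumpVariance u θ ≤ u ^ 2 :=
  (jumpVariance_le_sq_mul_tilt hu θ).trans
    (mul_le_of_le_one_right (sq_nonneg u) (bernoulliTilt_le_one (jumpProb_mem_Icc hu) _))

lemma jumpVariance_le_cube_mul_exp (hu : 0 ≤ u) (θ : ℝ) :
    jumpVariance u θ ≤ u ^ 3 * Real.exp (|θ| * u) := calc
  jumpVariance u θ ≤ u ^ 2 * bernoulliTilt (jumpProb u) (θ * u) := jumpVariance_le_sq_mul_tilt hu θ
  _ ≤ u ^ 2 * (jumpProb u * Real.exp |θ * u|) := by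
    gcongr
    exact bernoulliTilt_le_mul_exp_abs (jumpProb_mem_Icc hu) _
  _ ≤ u ^ 2 * (u * Real.exp |θ * u|) := by
    gcongr
    exact jumpProb_le_self u
  _ = u ^ 3 * Real.exp (|θ| * u) := by rw [abs_mul, abs_of_nonneg hu]; ring

lemma jumpVariance_le_exp_mul_min (hu : 0 ≤ u) {θ M : ℝ} (hθ : |θ| ≤ M) :
    jumpVariance u θ ≤ Real.exp M * min (u ^ 2) (u ^ 3) := by
  have hexp : 1 ≤ Real.exp M := Real.one_le_exp ((abs_nonneg θ).trans hθ)
  rcases le_total u 1 with hu1 | hu1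
  · rw [min_eq_right (pow_le_pow_of_le_one hu hu1 (by norm_num)), mul_comm]
    refine (jumpVariance_le_cube_mul_exp hu θ).trans ?_
    gcongr
    exact (mul_le_of_le_one_right (abs_nonneg θ) hu1).trans hθ
  · rw [min_eq_left (pow_le_pow_right₀ hu1 (by norm_num))]
    exact (jumpVariance_le_sq hu θ).trans (le_mul_of_one_le_left (sq_nonneg u) hexp)

lemma monotone_jumpMean (hu : 0 ≤ u) : Monotone (jumpMean u) :=
  monotone_of_hasDerivAt_nonneg (hasDerivAt_jumpMean hu) (jumpVariance_nonneg hu)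

lemma tendsto_jumpMean_sub_zero_atTop (hu : 0 ≤ u) :
    Tendsto (fun θ ↦ jumpMean u θ - jumpMean u 0) atTop (𝓝 (u * Real.exp (-u))) := by
  rcases hu.eq_or_lt with rfl | hu
  · simp [jumpMean]
  have htilt : Tendsto (fun θ ↦ bernoulliTilt (jumpProb u) (θ * u)) atTop (𝓝 1) :=
    (tendsto_bernoulliTilt_atTop (jumpProb_mem_Ioo hu).1).comp (tendsto_id.atTop_mul_const hu)
  have hlim : u * 1 - u ^ 2 - jumpMean u 0 = u * Real.exp (-u) := by
    rw [jumpMean_zero_right]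
    ring
  exact hlim ▸ ((htilt.const_mul u).sub_const (u ^ 2)).sub_const (jumpMean u 0)

lemma le_exp_one_mul_add_min (hu : 0 ≤ u) :
    u ≤ Real.exp 1 * (u * Real.exp (-u)) + min (u ^ 2) (u ^ 3) := by
  rcases le_total u 1 with hu1 | hu1
  · have hexp : 1 ≤ Real.exp 1 * Real.exp (-u) := by
      rw [← Real.exp_add]
      exact Real.one_le_exp (by linarith)
    have hmin : 0 ≤ min (u ^ 2) (u ^ 3) := by positivity
    nlinarith
  · have hmin : u ≤ min (u ^ 2) (u ^ 3) :=
      le_min (le_self_pow₀ hu1 (by norm_num)) (le_self_pow₀ hu1 (by norm_num))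
    exact hmin.trans (le_add_of_nonneg_left (by positivity))

end Jump

section JumpField

variable {X : Type*} [MeasurableSpace X] {μ : Measure X} {u : X → ℝ}
  (hnn : 0 ≤ᵐ[μ] u) (hmin : Integrable (fun x ↦ min (u x ^ 2) (u x ^ 3)) μ)

include hnn hmin

lemma locallyDominated_jumpVariance : LocallyDominated (fun θ x ↦ jumpVariance (u x) θ) μ := fun M ↦
  ⟨_, hmin.const_mul (Real.exp M), hnn.mono fun _ hx θ hθ ↦
    (Real.norm_of_nonneg (jumpVariance_nonneg hx θ)).trans_le (jumpVariance_le_exp_mul_min hx hθ)⟩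

variable (hu : AEMeasurable u μ)

include hu

lemma locallyDominated_jumpMean : LocallyDominated (fun θ x ↦ jumpMean (u x) θ) μ := by
  refine (locallyDominated_jumpVariance hnn hmin).of_hasDerivAt ?_
    (hnn.mono fun _ hx ↦ hasDerivAt_jumpMean hx)
  exact hmin.mono' ((measurable_jumpMean 0).comp_aemeasurable hu).aestronglyMeasurable
    (hnn.mono fun _ hx ↦ abs_jumpMean_zero_right_le hx)

lemma locallyDominated_jumpCgf : LocallyDominated (fun θ x ↦ jumpCgf (u x) θ) μ :=
  (locallyDominated_jumpMean hnn hmin hu).of_hasDerivAt (by simp [jumpCgf_zero_right])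
    (hnn.mono fun _ hx ↦ hasDerivAt_jumpCgf hx)

lemma integrable_jumpMean (θ : ℝ) : Integrable (fun x ↦ jumpMean (u x) θ) μ :=
  (locallyDominated_jumpMean hnn hmin hu).integrable
    ((measurable_jumpMean θ).comp_aemeasurable hu).aestronglyMeasurable

lemma hasDerivAt_integral_jumpCgf (θ : ℝ) :
    HasDerivAt (fun t ↦ ∫ x, jumpCgf (u x) t ∂μ) (∫ x, jumpMean (u x) θ ∂μ) θ :=
  (locallyDominated_jumpCgf hnn hmin hu).hasDerivAt_integral
    (locallyDominated_jumpMean hnn hmin hu)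
    (fun t ↦ ((measurable_jumpCgf t).comp_aemeasurable hu).aestronglyMeasurable)
    (fun t ↦ ((measurable_jumpMean t).comp_aemeasurable hu).aestronglyMeasurable)
    (hnn.mono fun _ hx ↦ hasDerivAt_jumpCgf hx) θ

lemma hasDerivAt_integral_jumpMean (θ : ℝ) :
    HasDerivAt (fun t ↦ ∫ x, jumpMean (u x) t ∂μ) (∫ x, jumpVariance (u x) θ ∂μ) θ :=
  (locallyDominated_jumpMean hnn hmin hu).hasDerivAt_integral
    (locallyDominated_jumpVariance hnn hmin)
    (fun t ↦ ((measurable_jumpMean t).comp_aemeasurable hu).aestronglyMeasurable)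
    (fun t ↦ ((measurable_jumpVariance t).comp_aemeasurable hu).aestronglyMeasurable)
    (hnn.mono fun _ hx ↦ hasDerivAt_jumpMean hx) θ

lemma integral_jumpVariance_pos (hne : ¬ u =ᵐ[μ] 0) (θ : ℝ) : 0 < ∫ x, jumpVariance (u x) θ ∂μ :=
  integral_comp_pos hnn hne (jumpVariance_nonneg le_rfl θ) (fun _ hv ↦ jumpVariance_pos hv θ)
    ((locallyDominated_jumpVariance hnn hmin).integrable
      ((measurable_jumpVariance θ).comp_aemeasurable hu).aestronglyMeasurable)

lemma integral_jumpMean_zero_right_neg (hne : ¬ u =ᵐ[μ] 0) : ∫ x, jumpMean (u x) 0 ∂μ < 0 := by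
  have hpos : 0 < ∫ x, -jumpMean (u x) 0 ∂μ :=
    integral_comp_pos (h := fun v ↦ -jumpMean v 0) hnn hne (by simp [jumpMean])
      (fun _ hv ↦ neg_pos.2 (jumpMean_zero_right_neg hv)) (integrable_jumpMean hnn hmin hu 0).neg
  rwa [integral_neg, neg_pos] at hpos

lemma not_integrable_mul_exp_neg (hdiv : ¬ Integrable u μ) :
    ¬ Integrable (fun x ↦ u x * Real.exp (-u x)) μ := fun hint ↦
  hdiv <| ((hint.const_mul (Real.exp 1)).add hmin).mono' hu.aestronglyMeasurable <|
    hnn.mono fun _ hx ↦ (Real.norm_of_nonneg hx).trans_le (le_exp_one_mul_add_min hx)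

lemma tendsto_integral_jumpMean_atTop (hdiv : ¬ Integrable u μ) :
    Tendsto (fun θ ↦ ∫ x, jumpMean (u x) θ ∂μ) atTop atTop := by
  have hint := integrable_jumpMean hnn hmin hu
  have hint_sub (θ : ℝ) : Integrable (fun x ↦ jumpMean (u x) θ - jumpMean (u x) 0) μ :=
    (hint θ).sub (hint 0)
  have hincr : Tendsto (fun θ ↦ ∫ x, ‖jumpMean (u x) θ - jumpMean (u x) 0‖ ∂μ) atTop atTop :=
    tendsto_integral_norm_atTop_of_not_integrable hint_sub
      (hnn.mono fun _ hx ↦ tendsto_jumpMean_sub_zero_atTop hx)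
      (not_integrable_mul_exp_neg hnn hmin hu hdiv)
  refine (tendsto_atTop_add_const_right _ (∫ x, jumpMean (u x) 0 ∂μ) hincr).congr' ?_
  filter_upwards [eventually_ge_atTop 0] with θ hθ
  rw [← integral_add (hint_sub θ).norm (hint 0)]
  refine integral_congr_ae (hnn.mono fun x hx ↦ ?_)
  have hmono : 0 ≤ jumpMean (u x) θ - jumpMean (u x) 0 := sub_nonneg.2 (monotone_jumpMean hx hθ)
  simp only [Real.norm_of_nonneg hmono, sub_add_cancel]

end JumpField

lemma rpow_neg_two_mul {x : ℝ} (hx : 0 ≤ x) (α : ℝ) : x ^ (-(2 * α)) = (x ^ (-α)) ^ 2 := by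
  rw [← Real.rpow_mul_natCast hx]
  congr 1
  push_cast
  ring

lemma integrableOn_Ioi_min_rpow_neg_sq_cube {α : ℝ} (hα : α ∈ Set.Ioo (1 / 3) (1 / 2)) :
    IntegrableOn (fun x : ℝ ↦ min ((x ^ (-α)) ^ 2) ((x ^ (-α)) ^ 3)) (Set.Ioi 0) := by
  have h : IntegrableOn (fun x : ℝ ↦ min (x ^ (-α * (2 : ℕ))) (x ^ (-α * (3 : ℕ)))) (Set.Ioi 0) :=
    integrableOn_Ioi_min_rpow (by push_cast; linarith [hα.2]) (by push_cast; linarith [hα.1])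
  refine h.congr_fun (fun x hx ↦ ?_) measurableSet_Ioi
  simp only [Real.rpow_mul_natCast (Set.mem_Ioi.1 hx).le]

lemma one_div_sub_one_mem_Ioo {τ : ℝ} (hτ : τ ∈ Set.Ioo 3 4) :
    1 / (τ - 1) ∈ Set.Ioo (1 / 3) (1 / 2) :=
  ⟨one_div_lt_one_div_of_lt (by linarith [hτ.1]) (by linarith [hτ.2]),
    one_div_lt_one_div_of_lt (by norm_num) (by linarith [hτ.1])⟩

theorem limiting_variational_problem_general {X : Type*} [MeasurableSpace X] {μ : Measure X}
    {u : X → ℝ} (hu : AEMeasurable u μ) (hnn : 0 ≤ᵐ[μ] u)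
    (hmin : Integrable (fun x ↦ min (u x ^ 2) (u x ^ 3)) μ) (hdiv : ¬ Integrable u μ)
    (Λ : ℝ → ℝ)
    (hΛ : ∀ θ, Λ θ = ∫ x, (Real.log (1 + Real.exp (-u x) * (Real.exp (-θ * u x) - 1))
      + θ * u x - θ * u x ^ 2) ∂μ) :
    (∀ θ : ℝ, DifferentiableAt ℝ Λ θ) ∧
    (∀ θ : ℝ, DifferentiableAt ℝ (deriv Λ) θ) ∧
    (∀ θ : ℝ, 0 < deriv (deriv Λ) θ) ∧
    Λ 0 = 0 ∧
    deriv Λ 0 = (∫ x, u x * (1 - u x - Real.exp (-u x)) ∂μ) ∧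
    deriv Λ 0 < 0 ∧
    Tendsto (deriv Λ) atTop atTop ∧
    (∃! θs : ℝ, 0 < θs ∧ deriv Λ θs = 0) ∧
    (∀ θs : ℝ, 0 < θs → deriv Λ θs = 0 →
      (∀ θ' : ℝ, θ' ≠ θs → Λ θs < Λ θ') ∧ 0 < -Λ θs) := by
  have hΛ_eq : Λ = fun θ ↦ ∫ x, jumpCgf (u x) θ ∂μ := funext fun θ ↦
    (hΛ θ).trans (integral_congr_ae (hnn.mono fun x hx ↦ (jumpCgf_eq hx θ).symm))
  have hne : ¬ u =ᵐ[μ] 0 := fun h0 ↦ hdiv ((integrable_zero X ℝ μ).congr h0.symm)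
  have hderiv (θ : ℝ) : HasDerivAt Λ (∫ x, jumpMean (u x) θ ∂μ) θ :=
    hΛ_eq ▸ hasDerivAt_integral_jumpCgf hnn hmin hu θ
  have hderiv_eq : deriv Λ = fun θ ↦ ∫ x, jumpMean (u x) θ ∂μ := funext fun θ ↦ (hderiv θ).deriv
  have hderiv2 (θ : ℝ) : HasDerivAt (deriv Λ) (∫ x, jumpVariance (u x) θ ∂μ) θ :=
    hderiv_eq ▸ hasDerivAt_integral_jumpMean hnn hmin hu θ
  have hpos (θ : ℝ) : 0 < deriv (deriv Λ) θ :=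
    (hderiv2 θ).deriv ▸ integral_jumpVariance_pos hnn hmin hu hne θ
  have hΛ0 : Λ 0 = 0 := by simp [hΛ_eq, jumpCgf_zero_right]
  have hneg : deriv Λ 0 < 0 := hderiv_eq ▸ integral_jumpMean_zero_right_neg hnn hmin hu hne
  have htop : Tendsto (deriv Λ) atTop atTop :=
    hderiv_eq ▸ tendsto_integral_jumpMean_atTop hnn hmin hu hdiv
  have hmono : StrictMono (deriv Λ) := strictMono_of_deriv_pos hpos
  have hdiff : Differentiable ℝ Λ := fun θ ↦ (hderiv θ).differentiableAt
  have hdiff2 : Differentiable ℝ (deriv Λ) := fun θ ↦ (hderiv2 θ).differentiableAt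
  have hstrict {θs : ℝ} (h0 : deriv Λ θs = 0) (θ' : ℝ) (hθ' : θ' ≠ θs) : Λ θs < Λ θ' :=
    lt_of_strictMono_deriv_of_deriv_eq_zero hdiff hmono h0 hθ'
  exact ⟨hdiff, hdiff2, hpos, hΛ0, by simp only [hderiv_eq, jumpMean_zero_right], hneg, htop,
    existsUnique_pos_eq_zero hdiff2.continuous hmono hneg htop,
    fun θs hθs h0 ↦ ⟨hstrict h0, neg_pos.2 ((hstrict h0 0 hθs.ne).trans_eq hΛ0)⟩⟩

/-- Lemma 3.5, uniqueness of the limiting variational problem.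
`Λ(θ) = ∫_0^∞ f(x;θ) dx` is twice differentiable with `Λ'' > 0`, `Λ(0) = 0`,
`Λ'(0) = ∫_0^∞ x^{-α}[1 - x^{-α} - e^{-x^{-α}}] dx < 0`, and `Λ'(θ) → ∞` as `θ → ∞`.
Consequently there is a unique `θ* > 0` with `Λ'(θ*) = 0`; it is the unique minimizer of `Λ`
and `I := -Λ(θ*) > 0`. -/
theorem limiting_variational_problem
    (τ α : ℝ) (hτ : τ ∈ Set.Ioo (3 : ℝ) 4) (hα : α = 1 / (τ - 1))
    (f : ℝ → ℝ → ℝ)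
    (hf : ∀ x θ : ℝ, f x θ
      = Real.log (1 + Real.exp (-x ^ (-α)) * (Real.exp (-θ * x ^ (-α)) - 1))
        + θ * x ^ (-α) - θ * x ^ (-(2 * α)))
    (Λ : ℝ → ℝ) (hΛ : ∀ θ, Λ θ = ∫ x in Set.Ioi (0 : ℝ), f x θ) :
    (∀ θ : ℝ, DifferentiableAt ℝ Λ θ) ∧
    (∀ θ : ℝ, DifferentiableAt ℝ (deriv Λ) θ) ∧
    (∀ θ : ℝ, 0 < deriv (deriv Λ) θ) ∧
    Λ 0 = 0 ∧
    deriv Λ 0 = (∫ x in Set.Ioi (0 : ℝ),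
      x ^ (-α) * (1 - x ^ (-α) - Real.exp (-x ^ (-α)))) ∧
    deriv Λ 0 < 0 ∧
    Tendsto (deriv Λ) atTop atTop ∧
    (∃! θs : ℝ, 0 < θs ∧ deriv Λ θs = 0) ∧
    (∀ θs : ℝ, 0 < θs → deriv Λ θs = 0 →
      (∀ θ' : ℝ, θ' ≠ θs → Λ θs < Λ θ') ∧ 0 < -Λ θs) := by
  have hα_mem : α ∈ Set.Ioo (1 / 3) (1 / 2) := hα ▸ one_div_sub_one_mem_Ioo hτ
  refine limiting_variational_problem_general (by fun_prop)
    (ae_restrict_of_forall_mem measurableSet_Ioi fun x hx ↦ Real.rpow_nonneg (le_of_lt hx) (-α))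
    (integrableOn_Ioi_min_rpow_neg_sq_cube hα_mem) (not_integrableOn_Ioi_rpow (-α)) Λ fun θ ↦ ?_
  rw [hΛ]
  refine setIntegral_congr_fun measurableSet_Ioi fun x hx ↦ ?_
  simp only [hf, rpow_neg_two_mul (le_of_lt hx)]
end

section
/- The function I_E is concave and continuously differentiable on [0,1] with I_E(0)=0 and I_E(1)=0, and for every a∈[0,1]: I_E(a) ≤ a·I_E'(0) and I_E(a) ≤ −(1−a)·I_E'(1), where I_E'(0)>0 and I_E'(1)<0 denote the one-sided derivatives at the endpoints. -/
open MeasureTheory Filter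

/-! Substituting `v = x ^ (-α)` turns `Λ θ` into `τ - 1` times the integral of
`(log D - θ v ^ 2) v ^ (-τ)`, where `D = exp (θ v) (1 - exp (-v)) + exp (-v)`. Since
`∂ log D / ∂θ = v exp (θ v) (1 - exp (-v)) / D`, differentiating under the integral gives
`Λ' θ⋆ = I_E 1`; hence criticality of `θ⋆` is exactly `I_E 1 = 0`. The integrand of `I_E` has a
strictly decreasing derivative in `a`, so `I_E` is strictly concave on `[0, 1]` and vanishes at both
endpoints. The chord between them has slope `0`, which lies strictly between the endpoint
derivatives, and the two upper bounds are the tangent lines at the endpoints. -/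

section Calculus

theorem strictConcaveOn_of_hasDerivWithinAt {S : Set ℝ} {f f' : ℝ → ℝ} (hS : Convex ℝ S)
    (hf : ∀ x ∈ S, HasDerivWithinAt f (f' x) S x) (hf' : StrictAntiOn f' S) :
    StrictConcaveOn ℝ S f := by
  have hderiv : ∀ x ∈ interior S, HasDerivAt f (f' x) x := fun x hx ↦
    (hf x (interior_subset hx)).hasDerivAt (mem_interior_iff_mem_nhds.1 hx)
  refine StrictAntiOn.strictConcaveOn_of_deriv hS (fun x hx ↦ (hf x hx).continuousWithinAt) ?_
  exact (hf'.mono interior_subset).congr fun x hx ↦ (hderiv x hx).deriv.symm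

theorem le_tangent_of_concaveOn {S : Set ℝ} {f : ℝ → ℝ} {f' x y : ℝ} (hf : ConcaveOn ℝ S f)
    (hx : x ∈ S) (hy : y ∈ S) (hderiv : HasDerivWithinAt f f' S x) :
    f y ≤ f x + f' * (y - x) := by
  rcases lt_trichotomy x y with hxy | rfl | hyx
  · have hslope := hf.slope_le_of_hasDerivWithinAt hx hy hxy hderiv
    rw [slope_def_field, div_le_iff₀ (sub_pos.2 hxy)] at hslope
    linarith
  · simp
  · have hslope := hf.le_slope_of_hasDerivWithinAt hy hx hyx hderiv
    rw [slope_def_field, le_div_iff₀ (sub_pos.2 hyx)] at hslope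
    linarith

theorem endpoint_deriv_signs_of_strictConcaveOn {a b : ℝ} {f : ℝ → ℝ} {fa' fb' : ℝ} (hab : a < b)
    (hf : StrictConcaveOn ℝ (Set.Icc a b) f) (hfab : f a = f b)
    (hfa : HasDerivWithinAt f fa' (Set.Icc a b) a) (hfb : HasDerivWithinAt f fb' (Set.Icc a b) b) :
    0 < fa' ∧ fb' < 0 := by
  have ha : a ∈ Set.Icc a b := Set.left_mem_Icc.2 hab.le
  have hb : b ∈ Set.Icc a b := Set.right_mem_Icc.2 hab.le
  have hslope : slope f a b = 0 := by rw [slope_def_field, hfab, sub_self, zero_div]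
  exact ⟨hslope.symm.trans_lt (hf.slope_lt_of_hasDerivWithinAt ha hb hab hfa),
    (hf.lt_slope_of_hasDerivWithinAt ha hb hab hfb).trans_eq hslope⟩

end Calculus

section DominatedIntegrals

variable {β : Type*} [MeasurableSpace β] {μ : Measure β}

theorem strictAntiOn_integral {S : Set ℝ} {F : ℝ → β → ℝ} (hμ : μ ≠ 0)
    (hF_int : ∀ x ∈ S, Integrable (F x) μ) (hF : ∀ᵐ v ∂μ, StrictAntiOn (F · v) S) :
    StrictAntiOn (fun x ↦ ∫ v, F x v ∂μ) S := by
  intro x hx y hy hxy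
  have hpos : ∀ᵐ v ∂μ, 0 < F x v - F y v := hF.mono fun v hv ↦ sub_pos.2 (hv hx hy hxy)
  rw [← sub_pos, ← integral_sub (hF_int x hx) (hF_int y hy),
    integral_pos_iff_support_of_nonneg_ae (hpos.mono fun v hv ↦ hv.le)
      ((hF_int x hx).sub (hF_int y hy)), pos_iff_ne_zero]
  intro hsupport
  have hzero : ∀ᵐ v ∂μ, F x v - F y v = 0 := by
    simpa only [Function.mem_support, not_not] using measure_eq_zero_iff_ae_notMem.1 hsupport
  have hfalse : ∀ᵐ _ ∂μ, False := by filter_upwards [hpos, hzero] with v hv hv' using hv.ne' hv'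
  exact hμ (ae_eq_bot.1 (eventually_false_iff_eq_bot.1 hfalse))

variable {E : Type*} [NormedAddCommGroup E] [NormedSpace ℝ E]
  {S : Set ℝ} {F F' : ℝ → β → E} {bound : β → ℝ} {x₀ x : ℝ}

theorem ae_norm_sub_le_of_hasDerivWithinAt (hS : Convex ℝ S)
    (hderiv : ∀ᵐ v ∂μ, ∀ x ∈ S, HasDerivWithinAt (F · v) (F' x v) S x)
    (hbound : ∀ᵐ v ∂μ, ∀ x ∈ S, ‖F' x v‖ ≤ bound v) :
    ∀ᵐ v ∂μ, ∀ x ∈ S, ∀ y ∈ S, ‖F y v - F x v‖ ≤ bound v * |y - x| := by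
  filter_upwards [hderiv, hbound] with v hv hbv x hx y hy
  exact hS.norm_image_sub_le_of_norm_hasDerivWithin_le hv hbv hx hy

theorem integrable_of_hasDerivWithinAt_of_dominated (hS : Convex ℝ S) (hx₀ : x₀ ∈ S)
    (hF_meas : AEStronglyMeasurable (F x) μ) (hF_int : Integrable (F x₀) μ)
    (hderiv : ∀ᵐ v ∂μ, ∀ x ∈ S, HasDerivWithinAt (F · v) (F' x v) S x)
    (hbound : ∀ᵐ v ∂μ, ∀ x ∈ S, ‖F' x v‖ ≤ bound v) (hbound_int : Integrable bound μ)
    (hx : x ∈ S) : Integrable (F x) μ := by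
  have hdiff : Integrable (F x - F x₀) μ := by
    refine (hbound_int.mul_const |x - x₀|).mono' (hF_meas.sub hF_int.aestronglyMeasurable) ?_
    filter_upwards [ae_norm_sub_le_of_hasDerivWithinAt hS hderiv hbound] with v hv
    exact hv x₀ hx₀ x hx
  simpa using hdiff.add hF_int

theorem hasDerivWithinAt_integral_of_dominated (hS : Convex ℝ S) (hx₀ : x₀ ∈ S)
    (hF_meas : ∀ x ∈ S, AEStronglyMeasurable (F x) μ) (hF_int : Integrable (F x₀) μ)
    (hderiv : ∀ᵐ v ∂μ, ∀ x ∈ S, HasDerivWithinAt (F · v) (F' x v) S x)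
    (hbound : ∀ᵐ v ∂μ, ∀ x ∈ S, ‖F' x v‖ ≤ bound v) (hbound_int : Integrable bound μ)
    (hx : x ∈ S) : HasDerivWithinAt (fun x ↦ ∫ v, F x v ∂μ) (∫ v, F' x v ∂μ) S x := by
  have hint : ∀ y ∈ S, Integrable (F y) μ := fun y hy ↦
    integrable_of_hasDerivWithinAt_of_dominated hS hx₀ (hF_meas y hy) hF_int hderiv hbound
      hbound_int hy
  have hmem : ∀ᶠ y in nhdsWithin x (S \ {x}), y ∈ S \ {x} := self_mem_nhdsWithin
  rw [hasDerivWithinAt_iff_tendsto_slope]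
  suffices Tendsto (fun y ↦ ∫ v, slope (F · v) x y ∂μ) (nhdsWithin x (S \ {x}))
      (nhds (∫ v, F' x v ∂μ)) by
    refine this.congr' (hmem.mono fun y hy ↦ ?_)
    simp only [slope_def_module]
    rw [integral_smul, integral_sub (hint y hy.1) (hint x hx)]
  refine tendsto_integral_filter_of_dominated_convergence bound ?_ ?_ hbound_int ?_
  · refine hmem.mono fun y hy ↦ ?_
    simp only [slope_def_module]
    exact (((hint y hy.1).sub (hint x hx)).smul _).aestronglyMeasurable
  · refine hmem.mono fun y hy ↦ ?_
    filter_upwards [ae_norm_sub_le_of_hasDerivWithinAt hS hderiv hbound] with v hv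
    have hyx : 0 < |y - x| := abs_pos.2 (sub_ne_zero.2 hy.2)
    rw [slope_def_module, norm_smul, norm_inv, Real.norm_eq_abs, inv_mul_le_iff₀ hyx, mul_comm]
    exact hv x hx y hy.1
  · filter_upwards [hderiv] with v hv
    exact hasDerivWithinAt_iff_tendsto_slope.1 (hv x hx)

end DominatedIntegrals

section PowerWeights

theorem integrableOn_Ioi_min_rpow_s18 {p q : ℝ} (hp : -1 < p) (hq : q < -1) :
    IntegrableOn (fun v : ℝ ↦ min (v ^ p) (v ^ q)) (Set.Ioi 0) := by
  have hmeas : Measurable fun v : ℝ ↦ min (v ^ p) (v ^ q) := by fun_prop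
  have hnorm : ∀ v : ℝ, 0 < v → ‖min (v ^ p) (v ^ q)‖ = min (v ^ p) (v ^ q) := fun v hv ↦
    Real.norm_of_nonneg (by positivity)
  rw [← Set.Ioc_union_Ioi_eq_Ioi (zero_le_one (α := ℝ))]
  refine IntegrableOn.union ?_ ?_
  · refine (intervalIntegral.intervalIntegrable_rpow' (a := 0) (b := 1) hp).1.mono'
      hmeas.aestronglyMeasurable ((ae_restrict_mem measurableSet_Ioc).mono fun v hv ↦ ?_)
    exact (hnorm v hv.1).trans_le (min_le_left _ _)
  · refine (integrableOn_Ioi_rpow_of_lt hq one_pos).mono'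
      hmeas.aestronglyMeasurable ((ae_restrict_mem measurableSet_Ioi).mono fun v hv ↦ ?_)
    exact (hnorm v (one_pos.trans hv)).trans_le (min_le_right _ _)

theorem integral_Ioi_comp_rpow_neg_inv {E : Type*} [NormedAddCommGroup E] [NormedSpace ℝ E]
    {s : ℝ} (hs : 0 < s) (g : ℝ → E) :
    ∫ x in Set.Ioi (0 : ℝ), g (x ^ (-s⁻¹)) =
      s • ∫ v in Set.Ioi (0 : ℝ), v ^ (-(s + 1)) • g v := by
  rw [← integral_comp_rpow_Ioi _ (neg_ne_zero.2 hs.ne'), ← integral_smul]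
  refine setIntegral_congr_fun measurableSet_Ioi fun v hv ↦ ?_
  have hinv : (v ^ (-s)) ^ (-s⁻¹) = v := by
    rw [← Real.rpow_mul (le_of_lt hv), neg_mul_neg, mul_inv_cancel₀ hs.ne', Real.rpow_one]
  simp only [hinv, abs_neg, abs_of_pos hs, smul_smul, neg_add']

end PowerWeights

theorem abs_exp_sub_one_le_abs_mul_exp_abs (x : ℝ) :
    |Real.exp x - 1| ≤ |x| * Real.exp |x| := by
  have h := Complex.norm_exp_sub_sum_le_norm_mul_exp x 1
  rw [Finset.sum_range_one, pow_zero, Nat.factorial_zero, pow_one, Nat.cast_one, div_one] at h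
  exact_mod_cast h

theorem abs_exp_mul_sub_one_le {M θ v : ℝ} (hθ : |θ| ≤ M) (hv : 0 ≤ v) (hv1 : v ≤ 1) :
    |Real.exp (θ * v) - 1| ≤ M * v * Real.exp M := by
  have hM : 0 ≤ M := (abs_nonneg θ).trans hθ
  have hθv : |θ * v| ≤ M * v := by rw [abs_mul, abs_of_nonneg hv]; gcongr
  refine (abs_exp_sub_one_le_abs_mul_exp_abs _).trans ?_
  gcongr
  exact hθv.trans (mul_le_of_le_one_right hM hv1)

section ExponentialTilt

/-- The normalising constant `E[exp (θ v 1{T ≤ 1})]` for `T` exponential of rate `v`. -/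
noncomputable def tiltNormalizer (θ v : ℝ) : ℝ :=
  Real.exp (θ * v) * (1 - Real.exp (-v)) + Real.exp (-v)

/-- For `a ∈ [0, 1]`, the probability of `T ≤ a` when the law of an exponential variable `T` of
rate `v` is tilted by `exp (θ v 1{T ≤ 1})`. The formula is used for all real `a`. -/
noncomputable def tiltedCDF (θ v a : ℝ) : ℝ :=
  Real.exp (θ * v) * (1 - Real.exp (-a * v)) / tiltNormalizer θ v

/-- The density on `[0, 1]` of the tilted law whose distribution function is `tiltedCDF θ v`. -/
noncomputable def tiltedDensity (θ v a : ℝ) : ℝ :=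
  Real.exp (θ * v) * (v * Real.exp (-a * v)) / tiltNormalizer θ v

variable {M θ v a s : ℝ}

theorem tiltNormalizer_pos (hv : 0 ≤ v) : 0 < tiltNormalizer θ v :=
  add_pos_of_nonneg_of_pos
    (mul_nonneg (Real.exp_pos _).le (sub_nonneg.2 (Real.exp_le_one_iff.2 (neg_nonpos.2 hv))))
    (Real.exp_pos _)

theorem exp_neg_le_tiltNormalizer (hθ : |θ| ≤ M) (hv : 0 ≤ v) (hv1 : v ≤ 1) :
    Real.exp (-M) ≤ tiltNormalizer θ v := by
  have hM : 0 ≤ M := (abs_nonneg θ).trans hθ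
  have hexp : Real.exp (-M) ≤ Real.exp (θ * v) :=
    Real.exp_le_exp.2 (by nlinarith [neg_le_of_abs_le hθ])
  have hone : Real.exp (-M) ≤ 1 := Real.exp_le_one_iff.2 (neg_nonpos.2 hM)
  have hexp_v : Real.exp (-v) ≤ 1 := Real.exp_le_one_iff.2 (neg_nonpos.2 hv)
  -- `tiltNormalizer θ v` is a convex combination of `exp (θ v)` and `1`.
  calc Real.exp (-M) = Real.exp (-M) * (1 - Real.exp (-v)) + Real.exp (-M) * Real.exp (-v) := by
        ring
    _ ≤ Real.exp (θ * v) * (1 - Real.exp (-v)) + 1 * Real.exp (-v) := by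
        have := sub_nonneg.2 hexp_v
        gcongr
    _ = tiltNormalizer θ v := by rw [one_mul, tiltNormalizer]

theorem tiltedDensity_sub_eq (hv : 0 ≤ v) :
    tiltedDensity θ v a - v =
      v * ((Real.exp (θ * v) - 1) * Real.exp (-v) -
        Real.exp (θ * v) * (1 - Real.exp (-a * v))) / tiltNormalizer θ v := by
  rw [tiltedDensity, eq_div_iff (tiltNormalizer_pos hv).ne', sub_mul,
    div_mul_cancel₀ _ (tiltNormalizer_pos hv).ne', tiltNormalizer]
  ring

theorem abs_tiltedDensity_sub_le_of_le_one (hθ : |θ| ≤ M) (hv : 0 ≤ v) (hv1 : v ≤ 1)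
    (ha : a ∈ Set.Icc (0 : ℝ) 1) :
    |tiltedDensity θ v a - v| ≤ (1 + M) * Real.exp (2 * M) * v ^ 2 := by
  have hM : 0 ≤ M := (abs_nonneg θ).trans hθ
  have hD := tiltNormalizer_pos (θ := θ) hv
  have hexp : Real.exp (θ * v) ≤ Real.exp M :=
    Real.exp_le_exp.2 (by nlinarith [le_of_abs_le hθ])
  have hexp_sub := abs_exp_mul_sub_one_le hθ hv hv1
  have hexp_v : Real.exp (-v) ≤ 1 := Real.exp_le_one_iff.2 (neg_nonpos.2 hv)
  have hav : 0 ≤ a * v := mul_nonneg ha.1 hv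
  have hcdf_nonneg : 0 ≤ 1 - Real.exp (-a * v) :=
    sub_nonneg.2 (Real.exp_le_one_iff.2 (by linarith))
  have hcdf_le : 1 - Real.exp (-a * v) ≤ v := by
    nlinarith [Real.add_one_le_exp (-a * v), ha.2]
  have hnum : |(Real.exp (θ * v) - 1) * Real.exp (-v) -
      Real.exp (θ * v) * (1 - Real.exp (-a * v))| ≤ (1 + M) * Real.exp M * v := by
    calc _ ≤ |Real.exp (θ * v) - 1| * Real.exp (-v) +
          Real.exp (θ * v) * (1 - Real.exp (-a * v)) := by
          refine (abs_sub _ _).trans_eq ?_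
          rw [abs_mul, Real.abs_exp, abs_of_nonneg (mul_nonneg (Real.exp_pos _).le hcdf_nonneg)]
      _ ≤ M * v * Real.exp M * 1 + Real.exp M * v := by gcongr
      _ = (1 + M) * Real.exp M * v := by ring
  rw [tiltedDensity_sub_eq hv, abs_div, abs_mul, abs_of_nonneg hv, abs_of_pos hD, div_le_iff₀ hD]
  calc _ ≤ v * ((1 + M) * Real.exp M * v) := by gcongr
    _ = (1 + M) * Real.exp (2 * M) * v ^ 2 * Real.exp (-M) := by
        rw [two_mul, Real.exp_add, Real.exp_neg]; field_simp
    _ ≤ _ := by gcongr; exact exp_neg_le_tiltNormalizer hθ hv hv1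

theorem abs_tiltedDensity_sub_le_of_one_le (hv1 : 1 ≤ v) (ha : 0 ≤ a) :
    |tiltedDensity θ v a - v| ≤ v := by
  have hv : 0 ≤ v := zero_le_one.trans hv1
  have hD := tiltNormalizer_pos (θ := θ) hv
  have hexp_v : Real.exp (-v) ≤ 1 / 2 := by
    rw [Real.exp_neg, one_div]
    exact inv_anti₀ two_pos (by linarith [Real.add_one_le_exp v])
  have hexp_av : Real.exp (-a * v) ≤ 1 := Real.exp_le_one_iff.2 (by nlinarith)
  have hle : tiltedDensity θ v a ≤ 2 * v := by
    rw [tiltedDensity, div_le_iff₀ hD]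
    calc Real.exp (θ * v) * (v * Real.exp (-a * v)) ≤ Real.exp (θ * v) * (v * 1) := by gcongr
      _ = 2 * v * (Real.exp (θ * v) * (1 - 1 / 2)) := by ring
      _ ≤ 2 * v * tiltNormalizer θ v := by
          rw [tiltNormalizer]
          refine mul_le_mul_of_nonneg_left ?_ (by positivity)
          refine le_add_of_le_of_nonneg ?_ (Real.exp_pos _).le
          gcongr
  have hnonneg : 0 ≤ tiltedDensity θ v a := div_nonneg (by positivity) hD.le
  exact abs_le.2 ⟨by linarith, by linarith⟩

/-- A dominating function for `(tiltedDensity θ v a - v) * v ^ (-s)`, uniform over `|θ| ≤ M` and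
`a ∈ [0, 1]`; it is integrable on `(0, ∞)` for `2 < s < 3`. -/
noncomputable def tiltBound (M s v : ℝ) : ℝ :=
  (1 + M) * Real.exp (2 * M) * min (v ^ (2 - s)) (v ^ (1 - s))

theorem integrableOn_tiltBound (hs : s ∈ Set.Ioo (2 : ℝ) 3) :
    IntegrableOn (tiltBound M s) (Set.Ioi 0) :=
  (integrableOn_Ioi_min_rpow_s18 (by linarith [hs.2]) (by linarith [hs.1])).const_mul _

theorem abs_tiltedDensity_sub_mul_rpow_le (hθ : |θ| ≤ M) (hv : 0 < v)
    (ha : a ∈ Set.Icc (0 : ℝ) 1) :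
    |(tiltedDensity θ v a - v) * v ^ (-s)| ≤ tiltBound M s v := by
  have hM : 0 ≤ M := (abs_nonneg θ).trans hθ
  have hC : 1 ≤ (1 + M) * Real.exp (2 * M) :=
    one_le_mul_of_one_le_of_one_le (by linarith) (Real.one_le_exp (by positivity))
  have hmin : min (v ^ (2 - s)) (v ^ (1 - s)) = min (v ^ 2) v * v ^ (-s) := by
    rw [min_mul_of_nonneg _ _ (by positivity), sub_eq_add_neg, sub_eq_add_neg, Real.rpow_add hv,
      Real.rpow_add hv, Real.rpow_two, Real.rpow_one]
  rw [abs_mul, abs_of_pos (Real.rpow_pos_of_pos hv _), tiltBound, hmin, ← mul_assoc]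
  gcongr
  rcases le_total v 1 with hv1 | hv1
  · rw [min_eq_left (by nlinarith)]
    exact abs_tiltedDensity_sub_le_of_le_one hθ hv.le hv1 ha
  · rw [min_eq_right (by nlinarith)]
    exact (abs_tiltedDensity_sub_le_of_one_le hv1 ha.1).trans (le_mul_of_one_le_left hv.le hC)

theorem hasDerivAt_tiltedCDF (θ v a : ℝ) :
    HasDerivAt (tiltedCDF θ v) (tiltedDensity θ v a) a := by
  have hneg : HasDerivAt (fun a : ℝ ↦ -a * v) (-1 * v) a := (hasDerivAt_neg a).mul_const v
  have hcdf := ((hneg.exp.const_sub 1).const_mul (Real.exp (θ * v))).div_const (tiltNormalizer θ v)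
  refine hcdf.congr_deriv ?_
  rw [tiltedDensity]
  ring

theorem hasDerivAt_tiltedCDF_sub_mul (θ v w a : ℝ) :
    HasDerivAt (fun a ↦ (tiltedCDF θ v a - a * v) * w) ((tiltedDensity θ v a - v) * w) a :=
  ((hasDerivAt_tiltedCDF θ v a).sub (hasDerivAt_mul_const v)).mul_const w

theorem tiltedCDF_zero (θ v : ℝ) : tiltedCDF θ v 0 = 0 := by
  simp [tiltedCDF]

theorem abs_tiltedCDF_sub_mul_rpow_le (hθ : |θ| ≤ M) (hv : 0 < v) (ha : a ∈ Set.Icc (0 : ℝ) 1) :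
    |(tiltedCDF θ v a - a * v) * v ^ (-s)| ≤ tiltBound M s v * a := by
  simpa [tiltedCDF_zero, abs_of_nonneg ha.1] using
    (convex_Icc (0 : ℝ) 1).norm_image_sub_le_of_norm_hasDerivWithin_le
      (fun b _ ↦ (hasDerivAt_tiltedCDF_sub_mul θ v (v ^ (-s)) b).hasDerivWithinAt)
      (fun b hb ↦ abs_tiltedDensity_sub_mul_rpow_le hθ hv hb)
      (Set.left_mem_Icc.2 zero_le_one) ha

theorem strictAnti_tiltedDensity (hv : 0 < v) : StrictAnti (tiltedDensity θ v) := by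
  intro a b hab
  have hD := tiltNormalizer_pos (θ := θ) hv.le
  simp only [tiltedDensity]
  gcongr

theorem hasDerivAt_log_tiltNormalizer (hv : 0 ≤ v) :
    HasDerivAt (fun θ ↦ Real.log (tiltNormalizer θ v)) (v * tiltedCDF θ v 1) θ := by
  have hD := (((hasDerivAt_id θ).mul_const v).exp.mul_const (1 - Real.exp (-v))).add_const
    (Real.exp (-v))
  refine (hD.log (tiltNormalizer_pos hv).ne').congr_deriv ?_
  simp only [tiltedCDF, tiltNormalizer, id, neg_mul, one_mul]
  ring

theorem log_one_add_exp_mul_eq_log_tiltNormalizer_sub (θ : ℝ) (hv : 0 ≤ v) :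
    Real.log (1 + Real.exp (-v) * (Real.exp (-θ * v) - 1)) =
      Real.log (tiltNormalizer θ v) - θ * v := by
  have hfactor : 1 + Real.exp (-v) * (Real.exp (-θ * v) - 1) =
      tiltNormalizer θ v / Real.exp (θ * v) := by
    rw [tiltNormalizer, neg_mul, Real.exp_neg (θ * v)]
    field_simp
    ring
  rw [hfactor, Real.log_div (tiltNormalizer_pos hv).ne' (Real.exp_ne_zero _), Real.log_exp]

end ExponentialTilt

section TiltedIntegrals

/-- The integral, against the power weight `v ^ (-s)`, of the excess of the tilted distribution
function over its linearisation `a * v`; it is `I_E` up to the factor `s = τ - 1`. -/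
noncomputable def tiltedExcess (s θ a : ℝ) : ℝ :=
  ∫ v in Set.Ioi (0 : ℝ), (tiltedCDF θ v a - a * v) * v ^ (-s)

/-- The derivative of `tiltedExcess s θ` obtained by differentiating under the integral. -/
noncomputable def tiltedExcessDeriv (s θ a : ℝ) : ℝ :=
  ∫ v in Set.Ioi (0 : ℝ), (tiltedDensity θ v a - v) * v ^ (-s)

/-- The integrated logarithm of `tiltNormalizer`, compensated by `θ * v ^ 2`; it is the function
`Λ` up to the factor `s = τ - 1`. -/
noncomputable def logTiltIntegral (s θ : ℝ) : ℝ :=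
  ∫ v in Set.Ioi (0 : ℝ), (Real.log (tiltNormalizer θ v) - θ * v ^ 2) * v ^ (-(s + 1))

variable {s : ℝ} (θ : ℝ)

theorem hasDerivAt_logTiltIntegral (hs : s ∈ Set.Ioo (2 : ℝ) 3) :
    HasDerivAt (logTiltIntegral s) (tiltedExcess s θ 1) θ := by
  set M := |θ| + 1
  have hM : 0 < M := by positivity
  have hθ : θ ∈ Metric.ball 0 M := by simp [M]
  refine (hasDerivWithinAt_integral_of_dominated (convex_ball 0 M) (Metric.mem_ball_self hM)
    (F := fun ϑ v ↦ (Real.log (tiltNormalizer ϑ v) - ϑ * v ^ 2) * v ^ (-(s + 1)))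
    (F' := fun ϑ v ↦ (tiltedCDF ϑ v 1 - 1 * v) * v ^ (-s))
    (fun ϑ _ ↦ ?_) ?_ ?_ ?_ (integrableOn_tiltBound (M := M) hs) hθ).hasDerivAt
    (Metric.isOpen_ball.mem_nhds hθ)
  · unfold tiltNormalizer
    exact Measurable.aestronglyMeasurable (by fun_prop)
  · simp [tiltNormalizer]
  · filter_upwards [ae_restrict_mem measurableSet_Ioi] with v hv ϑ _
    have hweight : v ^ (-s) = v * v ^ (-(s + 1)) := by
      rw [neg_add', Real.rpow_sub_one (ne_of_gt hv), mul_div_cancel₀ _ (ne_of_gt hv)]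
    refine (((hasDerivAt_log_tiltNormalizer (le_of_lt hv)).sub
      (hasDerivAt_mul_const _)).mul_const _).hasDerivWithinAt.congr_deriv ?_
    rw [hweight]
    ring
  · filter_upwards [ae_restrict_mem measurableSet_Ioi] with v hv ϑ hϑ
    simpa using abs_tiltedCDF_sub_mul_rpow_le (s := s) (mem_ball_zero_iff.1 hϑ).le hv
      (Set.right_mem_Icc.2 zero_le_one)

theorem aestronglyMeasurable_tiltedDensity_sub_mul_rpow (s θ a : ℝ) :
    AEStronglyMeasurable (fun v ↦ (tiltedDensity θ v a - v) * v ^ (-s))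
      (volume.restrict (Set.Ioi 0)) := by
  unfold tiltedDensity tiltNormalizer
  exact Measurable.aestronglyMeasurable (by fun_prop)

theorem ae_abs_tiltedDensity_sub_mul_rpow_le (s : ℝ) :
    ∀ᵐ v ∂volume.restrict (Set.Ioi (0 : ℝ)), ∀ a ∈ Set.Icc (0 : ℝ) 1,
      ‖(tiltedDensity θ v a - v) * v ^ (-s)‖ ≤ tiltBound |θ| s v :=
  (ae_restrict_mem measurableSet_Ioi).mono fun _ hv _ ha ↦
    abs_tiltedDensity_sub_mul_rpow_le le_rfl hv ha

theorem hasDerivWithinAt_tiltedExcess (hs : s ∈ Set.Ioo (2 : ℝ) 3) {a : ℝ}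
    (ha : a ∈ Set.Icc (0 : ℝ) 1) :
    HasDerivWithinAt (tiltedExcess s θ) (tiltedExcessDeriv s θ a) (Set.Icc 0 1) a := by
  refine hasDerivWithinAt_integral_of_dominated (convex_Icc 0 1) (Set.left_mem_Icc.2 zero_le_one)
    (fun b _ ↦ ?_) ?_ ?_ (ae_abs_tiltedDensity_sub_mul_rpow_le θ s) (integrableOn_tiltBound hs) ha
  · unfold tiltedCDF tiltNormalizer
    exact Measurable.aestronglyMeasurable (by fun_prop)
  · simp [tiltedCDF_zero]
  · exact Eventually.of_forall fun v b _ ↦ (hasDerivAt_tiltedCDF_sub_mul θ v _ b).hasDerivWithinAt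

theorem continuousOn_tiltedExcessDeriv (hs : s ∈ Set.Ioo (2 : ℝ) 3) :
    ContinuousOn (tiltedExcessDeriv s θ) (Set.Icc 0 1) := by
  refine continuousOn_of_dominated
    (fun a _ ↦ aestronglyMeasurable_tiltedDensity_sub_mul_rpow s θ a)
    (fun a ha ↦ (ae_abs_tiltedDensity_sub_mul_rpow_le θ s).mono fun v hv ↦ hv a ha)
    (integrableOn_tiltBound hs) (Eventually.of_forall fun v ↦ Continuous.continuousOn ?_)
  unfold tiltedDensity
  fun_prop

theorem strictAntiOn_tiltedExcessDeriv (hs : s ∈ Set.Ioo (2 : ℝ) 3) :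
    StrictAntiOn (tiltedExcessDeriv s θ) (Set.Icc 0 1) := by
  refine strictAntiOn_integral (by simp) (fun a ha ↦ ?_) ?_
  · exact (integrableOn_tiltBound hs).mono' (aestronglyMeasurable_tiltedDensity_sub_mul_rpow s θ a)
      ((ae_abs_tiltedDensity_sub_mul_rpow_le θ s).mono fun v hv ↦ hv a ha)
  · filter_upwards [ae_restrict_mem measurableSet_Ioi] with v hv a _ b _ hab
    exact mul_lt_mul_of_pos_right (sub_lt_sub_right (strictAnti_tiltedDensity hv hab) v)
      (Real.rpow_pos_of_pos hv _)

theorem tiltedExcess_zero (s θ : ℝ) : tiltedExcess s θ 0 = 0 := by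
  simp [tiltedExcess, tiltedCDF_zero]

theorem integral_log_one_add_exp_eq_mul_logTiltIntegral (hs : 0 < s) :
    ∫ x in Set.Ioi (0 : ℝ), (Real.log (1 + Real.exp (-x ^ (-s⁻¹)) *
        (Real.exp (-θ * x ^ (-s⁻¹)) - 1)) + θ * x ^ (-s⁻¹) - θ * x ^ (-(2 * s⁻¹))) =
      s * logTiltIntegral s θ := by
  calc _ = ∫ x in Set.Ioi (0 : ℝ), (Real.log (tiltNormalizer θ (x ^ (-s⁻¹))) -
        θ * (x ^ (-s⁻¹)) ^ 2) := by
        refine setIntegral_congr_fun measurableSet_Ioi fun x hx ↦ ?_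
        have hsq : x ^ (-(2 * s⁻¹)) = (x ^ (-s⁻¹)) ^ 2 := by
          rw [← Real.rpow_mul_natCast (le_of_lt hx)]
          congr 1
          push_cast
          ring
        rw [hsq, log_one_add_exp_mul_eq_log_tiltNormalizer_sub θ
          (Real.rpow_nonneg (le_of_lt hx) _), sub_add_cancel]
    _ = s • ∫ v in Set.Ioi (0 : ℝ), v ^ (-(s + 1)) •
        (Real.log (tiltNormalizer θ v) - θ * v ^ 2) :=
        integral_Ioi_comp_rpow_neg_inv hs fun v ↦ Real.log (tiltNormalizer θ v) - θ * v ^ 2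
    _ = s * logTiltIntegral s θ := by
        simp only [smul_eq_mul, logTiltIntegral, mul_comm (_ ^ _)]

end TiltedIntegrals

/-- Lemma 4.3(a) and surrounding facts about `I_E`.
`I_E` is concave and continuously differentiable on `[0,1]` with `I_E(0) = I_E(1) = 0`, and
for every `a ∈ [0,1]`, `I_E(a) ≤ a I_E'(0)` and `I_E(a) ≤ -(1-a) I_E'(1)`, where
`I_E'(0) > 0` and `I_E'(1) < 0` are the one-sided derivatives at the endpoints. -/
theorem IE_properties
    (τ α : ℝ) (hτ : τ ∈ Set.Ioo (3 : ℝ) 4) (hα : α = 1 / (τ - 1))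
    (f : ℝ → ℝ → ℝ)
    (hf : ∀ x θ' : ℝ, f x θ'
      = Real.log (1 + Real.exp (-x ^ (-α)) * (Real.exp (-θ' * x ^ (-α)) - 1))
        + θ' * x ^ (-α) - θ' * x ^ (-(2 * α)))
    (Λ : ℝ → ℝ) (hΛ : ∀ θ', Λ θ' = ∫ x in Set.Ioi (0 : ℝ), f x θ')
    (θstar : ℝ) (hθstar : ∀ θ', Λ θstar ≤ Λ θ')
    (hθstarpos : 0 < θstar) (hθstarcrit : deriv Λ θstar = 0)
    (IE : ℝ → ℝ)
    (hIE : ∀ a : ℝ, IE a = (τ - 1) * ∫ v in Set.Ioi (0 : ℝ),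
      (Real.exp (θstar * v) * (1 - Real.exp (-a * v)) /
          (Real.exp (θstar * v) * (1 - Real.exp (-v)) + Real.exp (-v)) - a * v)
        * v ^ (-(τ - 1))) :
    ConcaveOn ℝ (Set.Icc (0 : ℝ) 1) IE ∧
    ∃ IE' : ℝ → ℝ,
      ContinuousOn IE' (Set.Icc (0 : ℝ) 1) ∧
      (∀ a ∈ Set.Icc (0 : ℝ) 1, HasDerivWithinAt IE (IE' a) (Set.Icc (0 : ℝ) 1) a) ∧
      IE 0 = 0 ∧ IE 1 = 0 ∧
      0 < IE' 0 ∧ IE' 1 < 0 ∧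
      ∀ a ∈ Set.Icc (0 : ℝ) 1, IE a ≤ a * IE' 0 ∧ IE a ≤ -(1 - a) * IE' 1 := by
  have hs : τ - 1 ∈ Set.Ioo (2 : ℝ) 3 := ⟨by linarith [hτ.1], by linarith [hτ.2]⟩
  have hs0 : 0 < τ - 1 := two_pos.trans hs.1
  have hIE_eq : IE = fun a ↦ (τ - 1) * tiltedExcess (τ - 1) θstar a := funext hIE
  have hΛ_eq : Λ = fun θ ↦ (τ - 1) * logTiltIntegral (τ - 1) θ := by
    funext θ
    simp only [hΛ, hf, hα, one_div, integral_log_one_add_exp_eq_mul_logTiltIntegral θ hs0]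
  have hΛ_deriv : HasDerivAt Λ (IE 1) θstar := by
    simpa only [hΛ_eq, hIE_eq] using (hasDerivAt_logTiltIntegral θstar hs).const_mul (τ - 1)
  have hIE1 : IE 1 = 0 := hΛ_deriv.deriv.symm.trans hθstarcrit
  have hIE0 : IE 0 = 0 := by simp only [hIE_eq, tiltedExcess_zero, mul_zero]
  let IE' : ℝ → ℝ := fun a ↦ (τ - 1) * tiltedExcessDeriv (τ - 1) θstar a
  have hderiv : ∀ a ∈ Set.Icc (0 : ℝ) 1, HasDerivWithinAt IE (IE' a) (Set.Icc 0 1) a :=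
    fun a ha ↦ hIE_eq ▸ (hasDerivWithinAt_tiltedExcess θstar hs ha).const_mul (τ - 1)
  have hanti : StrictAntiOn IE' (Set.Icc 0 1) :=
    (strictMono_mul_left_of_pos hs0).comp_strictAntiOn (strictAntiOn_tiltedExcessDeriv θstar hs)
  have hconc := strictConcaveOn_of_hasDerivWithinAt (convex_Icc 0 1) hderiv hanti
  have h0 : (0 : ℝ) ∈ Set.Icc (0 : ℝ) 1 := Set.left_mem_Icc.2 zero_le_one
  have h1 : (1 : ℝ) ∈ Set.Icc (0 : ℝ) 1 := Set.right_mem_Icc.2 zero_le_one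
  obtain ⟨hIE'0, hIE'1⟩ := endpoint_deriv_signs_of_strictConcaveOn one_pos hconc
    (hIE0.trans hIE1.symm) (hderiv 0 h0) (hderiv 1 h1)
  refine ⟨hconc.concaveOn, IE', (continuousOn_tiltedExcessDeriv θstar hs).const_mul (τ - 1),
    hderiv, hIE0, hIE1, hIE'0, hIE'1, fun a ha ↦ ⟨?_, ?_⟩⟩
  · linarith [le_tangent_of_concaveOn hconc.concaveOn h0 ha (hderiv 0 h0)]
  · linarith [le_tangent_of_concaveOn hconc.concaveOn h1 ha (hderiv 1 h1)]
end

section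
/- The following asymptotics hold near the endpoints: (i) as a→1, J_V(a) = −(1−a)·J_V'(1)·(1+o(1)) with J_V'(1)<0; (ii) as a→0, I_V(a) = a^{τ−3}·𝓘_V·(1+o(1)), where 𝓘_V = (τ−1)∫_0^∞ (1−e^{−y}) e^{−y} y^{−(τ−2)} dy; consequently there exist constants 0<c̲<c̄<∞ and ε>0 such that c̲ a^{τ−3} ≤ I_V(a) ≤ c̄ a^{τ−3} for every a∈(0,ε]. -/
open MeasureTheory Filter

/-!
For `θ < 0` the convexity of `exp` makes the integrand of `Λ` strictly positive, so
`Λ θ > 0 = Λ 0`. The minimizer `θ*` is therefore nonnegative.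

After division by `e^{θv}` the probabilities `p` and `q` become `w(v)(1 - e^{-av})` and
`w(v)(e^{-av} - e^{-v})`, where `w(v) = (1 - e^{-v} + e^{-(1+θ)v})⁻¹` is bounded and tends to `1`
at infinity when `θ > -1`. Substituting `v = y / a` in `I_V(a)` extracts the factor `a^{τ-3}`, and
`p(y/a, a) → 1 - e^{-y}` as `a → 0`, which gives (ii) by dominated convergence. Since `q(v, 1) = 0`,
differentiating `J_V` under the integral sign gives
`J_V'(1) = -(τ-1) ∫ w(v) v e^{-v} v^{-(τ-2)} dv < 0`, which is (i).
-/

section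

open Real Set Topology

/-! ### Integrals and limits on the half-line -/

lemma setIntegral_pos_of_forall_pos {X : Type*} [MeasurableSpace X] {μ : Measure X} {s : Set X}
    {g : X → ℝ} (hs : MeasurableSet s) (hμ : μ s ≠ 0) (hg : IntegrableOn g s μ)
    (hpos : ∀ x ∈ s, 0 < g x) : 0 < ∫ x in s, g x ∂μ := by
  have hsupp : Function.support g ∩ s = s := inter_eq_right.2 fun x hx => (hpos x hx).ne'
  rw [setIntegral_pos_iff_support_of_nonneg_ae
    ((ae_restrict_mem hs).mono fun x hx => (hpos x hx).le) hg, hsupp]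
  exact pos_iff_ne_zero.2 hμ

lemma integrableOn_mul_exp_neg_mul_mul_rpow {b r : ℝ} (hb : 0 < b) (hr : -2 < r) :
    IntegrableOn (fun y : ℝ => y * exp (-(b * y)) * y ^ r) (Ioi 0) := by
  refine (integrableOn_rpow_mul_exp_neg_mul_rpow (s := r + 1) (by linarith) one_pos hb).congr_fun
    (fun y hy => ?_) measurableSet_Ioi
  simp only [rpow_one, rpow_add_one (ne_of_gt hy)]
  ring_nf

lemma integral_comp_inv_mul_mul_rpow (g : ℝ → ℝ) (r : ℝ) {a : ℝ} (ha : 0 < a) :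
    ∫ y in Ioi 0, g (a⁻¹ * y) * y ^ r = (∫ v in Ioi 0, g v * v ^ r) * a ^ (r + 1) := by
  have hsubst := integral_comp_mul_left_Ioi (fun v => g v * v ^ r) 0 (inv_pos.2 ha)
  simp only [inv_inv, mul_zero, smul_eq_mul] at hsubst
  calc ∫ y in Ioi 0, g (a⁻¹ * y) * y ^ r
      = ∫ y in Ioi 0, g (a⁻¹ * y) * (a⁻¹ * y) ^ r * a ^ r := by
        refine setIntegral_congr_fun measurableSet_Ioi fun y hy => ?_
        have hay : (a⁻¹ * y) ^ r * a ^ r = y ^ r := by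
          rw [← mul_rpow (mul_pos (inv_pos.2 ha) hy).le ha.le, mul_right_comm,
            inv_mul_cancel₀ ha.ne', one_mul]
        simp only [mul_assoc, hay]
    _ = (∫ v in Ioi 0, g v * v ^ r) * a ^ (r + 1) := by
        rw [integral_mul_const, hsubst, rpow_add_one ha.ne']
        ring

lemma tendsto_div_sub_of_hasDerivAt {g : ℝ → ℝ} {g' x : ℝ} (hg : HasDerivAt g g' x)
    (hx : g x = 0) : Tendsto (fun a => g a / (x - a)) (𝓝[≠] x) (𝓝 (-g')) := by
  refine hg.tendsto_slope.neg.congr fun a => ?_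
  rw [slope_def_field, hx, sub_zero, ← div_neg, neg_sub]

lemma exists_mul_le_and_le_mul_of_tendsto_div {g h : ℝ → ℝ} {x L : ℝ} (hL : 0 < L)
    (hh : ∀ a, x < a → 0 < h a) (hlim : Tendsto (fun a => g a / h a) (𝓝[>] x) (𝓝 L)) :
    ∃ c₁ c₂ u : ℝ, 0 < c₁ ∧ c₁ < c₂ ∧ x < u ∧
      ∀ a ∈ Ioc x u, c₁ * h a ≤ g a ∧ g a ≤ c₂ * h a := by
  obtain ⟨u, hu, hsub⟩ := mem_nhdsGT_iff_exists_Ioc_subset.1 <| hlim.eventually <|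
    Ioo_mem_nhds (show L / 2 < L by linarith) (show L < 2 * L by linarith)
  refine ⟨L / 2, 2 * L, u, by linarith, by linarith, hu, fun a ha => ?_⟩
  have hratio := hsub ha
  exact ⟨(le_div_iff₀ (hh a ha.1)).1 hratio.1.le, (div_le_iff₀ (hh a ha.1)).1 hratio.2.le⟩

/-! ### The minimizer is nonnegative -/

/-- The integrand `f(x; θ)` of `Λ(θ)`. -/
noncomputable def rateIntegrand (α x θ : ℝ) : ℝ :=
  log (1 + exp (-x ^ (-α)) * (exp (-θ * x ^ (-α)) - 1)) + θ * x ^ (-α) - θ * x ^ (-(2 * α))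

/-- The integrand `f(x; θ)` of `Λ(θ)` as a function of `v = x ^ (-α)`. -/
noncomputable def rateProfile (θ v : ℝ) : ℝ :=
  log (1 + exp (-v) * (exp (-θ * v) - 1)) + θ * v - θ * v ^ 2

lemma rateIntegrand_eq_rateProfile (α θ : ℝ) {x : ℝ} (hx : 0 ≤ x) :
    rateIntegrand α x θ = rateProfile θ (x ^ (-α)) := by
  rw [rateIntegrand, rateProfile, ← rpow_mul_natCast hx]
  ring_nf

lemma rateIntegrand_zero_right (α x : ℝ) : rateIntegrand α x 0 = 0 := by simp [rateIntegrand]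

lemma one_sub_exp_neg_add_exp_pos (θ : ℝ) {v : ℝ} (hv : 0 ≤ v) :
    0 < 1 - exp (-v) + exp (-(1 + θ) * v) :=
  add_pos_of_nonneg_of_pos (sub_nonneg.2 (exp_le_one_iff.2 (by linarith))) (exp_pos _)

lemma one_add_exp_neg_mul_exp_sub_one_pos (θ : ℝ) {v : ℝ} (hv : 0 ≤ v) :
    0 < 1 + exp (-v) * (exp (-θ * v) - 1) := by
  refine (one_sub_exp_neg_add_exp_pos θ hv).trans_eq ?_
  rw [mul_sub_one, ← exp_add]
  ring_nf

lemma continuousOn_rateProfile (θ : ℝ) : ContinuousOn (rateProfile θ) (Ici 0) := by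
  unfold rateProfile
  fun_prop (disch := exact fun v hv => (one_add_exp_neg_mul_exp_sub_one_pos θ hv).ne')

lemma rateProfile_pos {θ v : ℝ} (hθ : θ < 0) (hv : 0 < v) : 0 < rateProfile θ v := by
  have hconv : exp (exp (-v) * (-θ * v)) ≤ 1 + exp (-v) * (exp (-θ * v) - 1) := by
    have h := convexOn_exp.2 (mem_univ 0) (mem_univ (-θ * v))
      (sub_nonneg.2 (exp_le_one_iff.2 (by linarith : -v ≤ 0))) (exp_pos (-v)).le (by ring)
    simp only [smul_eq_mul, mul_zero, zero_add, exp_zero] at h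
    linarith
  have hlog := (le_log_iff_exp_le ((exp_pos _).trans_le hconv)).2 hconv
  have hexp : -v + 1 < exp (-v) := add_one_lt_exp (by linarith)
  have hmul : (-v + 1) * (-θ * v) < exp (-v) * (-θ * v) :=
    mul_lt_mul_of_pos_right hexp (mul_pos (neg_pos.2 hθ) hv)
  rw [rateProfile]
  linarith

lemma rateProfile_le (θ : ℝ) {v : ℝ} (hv : 0 ≤ v) :
    rateProfile θ v ≤ -θ * v ^ 2 - (1 - exp (-v)) * (1 - exp (θ * v)) := by
  have hcancel : exp (-θ * v) * exp (θ * v) = 1 := by rw [← exp_add]; simp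
  have hfactor : 1 + exp (-v) * (exp (-θ * v) - 1)
      = exp (-θ * v) * (1 - (1 - exp (-v)) * (1 - exp (θ * v))) := by
    linear_combination (exp (-v) - 1) * hcancel
  have hpos : 0 < 1 - (1 - exp (-v)) * (1 - exp (θ * v)) :=
    pos_of_mul_pos_right (hfactor ▸ one_add_exp_neg_mul_exp_sub_one_pos θ hv) (exp_pos _).le
  rw [rateProfile, hfactor, log_mul (exp_pos _).ne' hpos.ne', log_exp]
  linarith [log_le_sub_one_of_pos hpos]

lemma rateProfile_le_sq {θ v : ℝ} (hθ : θ ≤ 0) (hv : 0 ≤ v) : rateProfile θ v ≤ -θ * v ^ 2 := by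
  have hv1 : exp (-v) ≤ 1 := exp_le_one_iff.2 (by linarith)
  have hθv : exp (θ * v) ≤ 1 := exp_le_one_iff.2 (mul_nonpos_of_nonpos_of_nonneg hθ hv)
  linarith [rateProfile_le θ hv, mul_nonneg (sub_nonneg.2 hv1) (sub_nonneg.2 hθv)]

lemma sub_sq_le_one_sub_exp_neg {y : ℝ} (hy : 0 ≤ y) : y - y ^ 2 ≤ 1 - exp (-y) := by
  have hcancel : exp (-y) * exp y = 1 := by rw [← exp_add]; simp
  have hle : exp (-y) * (1 + y) ≤ 1 := by nlinarith [add_one_le_exp y, exp_pos (-y)]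
  have hcube : exp (-y) * (1 + y) ≤ (1 - y + y ^ 2) * (1 + y) := by
    linarith [pow_nonneg hy 3]
  linarith [le_of_mul_le_mul_right hcube (by linarith)]

lemma rateProfile_le_cube {θ v : ℝ} (hθ : θ ≤ 0) (hv : 0 ≤ v) :
    rateProfile θ v ≤ (-θ + θ ^ 2) * v ^ 3 := by
  have hs : 0 ≤ -θ * v := mul_nonneg (neg_nonneg.2 hθ) hv
  have hθv := sub_sq_le_one_sub_exp_neg hs
  rw [neg_mul, neg_neg] at hθv
  have h₁ : (v - (1 - exp (-v))) * (-θ * v) ≤ v ^ 2 * (-θ * v) :=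
    mul_le_mul_of_nonneg_right (by linarith [sub_sq_le_one_sub_exp_neg hv]) hs
  have h₂ : (1 - exp (-v)) * (-θ * v - (1 - exp (θ * v))) ≤ v * (-θ * v) ^ 2 :=
    mul_le_mul (by linarith [add_one_le_exp (-v)]) (by linarith)
      (by linarith [add_one_le_exp (θ * v)]) hv
  linarith [rateProfile_le θ hv]

/-- The quadratic bound on `rateProfile` gives integrability at `0` because `2 * α < 1`, the cubic
one at infinity because `1 < 3 * α`. -/
lemma integrableOn_rateProfile_rpow {α θ : ℝ} (hα : α ∈ Ioo (1 / 3 : ℝ) (1 / 2)) (hθ : θ < 0) :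
    IntegrableOn (fun x => rateProfile θ (x ^ (-α))) (Ioi 0) := by
  obtain ⟨hα3, hα2⟩ := hα
  have hcont : ContinuousOn (fun x : ℝ => rateProfile θ (x ^ (-α))) (Ioi 0) :=
    (continuousOn_rateProfile θ).comp
      (continuousOn_id.rpow_const fun x hx => .inl (ne_of_gt hx))
      fun x hx => rpow_nonneg (le_of_lt hx) _
  have habs : ∀ x : ℝ, 0 < x → ‖rateProfile θ (x ^ (-α))‖ = rateProfile θ (x ^ (-α)) :=
    fun x hx => norm_of_nonneg (rateProfile_pos hθ (rpow_pos_of_pos hx _)).le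
  have hpow : ∀ (n : ℕ) (x : ℝ), 0 < x → (x ^ (-α)) ^ n = ‖x ^ (-(n * α))‖ := fun n x hx => by
    rw [norm_of_nonneg (rpow_nonneg hx.le _), ← rpow_mul_natCast hx.le]
    ring_nf
  have htop : (fun x => rateProfile θ (x ^ (-α))) =O[atTop] (· ^ (-((3 : ℕ) * α))) := by
    refine .of_bound (-θ + θ ^ 2) ((eventually_gt_atTop 0).mono fun x hx => ?_)
    rw [habs x hx, ← hpow 3 x hx]
    exact rateProfile_le_cube hθ.le (rpow_nonneg hx.le _)
  have hbot : (fun x => rateProfile θ (x ^ (-α))) =O[𝓝[>] 0] (· ^ (-((2 : ℕ) * α))) := by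
    refine .of_bound (-θ) (eventually_mem_nhdsWithin.mono fun x hx => ?_)
    rw [habs x hx, ← hpow 2 x hx]
    exact rateProfile_le_sq hθ.le (rpow_nonneg (le_of_lt hx) _)
  have hmellin := mellin_convergent_of_isBigO_scalar (s := 1)
    (hcont.locallyIntegrableOn measurableSet_Ioi) htop (by push_cast; linarith) hbot
    (by push_cast; linarith)
  simpa using hmellin

lemma integral_rateIntegrand_pos {α θ : ℝ} (hα : α ∈ Ioo (1 / 3 : ℝ) (1 / 2)) (hθ : θ < 0) :
    0 < ∫ x in Ioi 0, rateIntegrand α x θ := by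
  rw [setIntegral_congr_fun measurableSet_Ioi
    fun x hx => rateIntegrand_eq_rateProfile α θ (le_of_lt hx)]
  exact setIntegral_pos_of_forall_pos measurableSet_Ioi (by simp)
    (integrableOn_rateProfile_rpow hα hθ) fun x hx => rateProfile_pos hθ (rpow_pos_of_pos hx _)

lemma nonneg_of_forall_integral_rateIntegrand_le {α θ : ℝ} (hα : α ∈ Ioo (1 / 3 : ℝ) (1 / 2))
    (hmin : ∀ θ', ∫ x in Ioi 0, rateIntegrand α x θ ≤ ∫ x in Ioi 0, rateIntegrand α x θ') :
    0 ≤ θ := by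
  by_contra! hθ
  have hle := hmin 0
  simp only [rateIntegrand_zero_right, integral_zero] at hle
  exact (integral_rateIntegrand_pos hα hθ).not_ge hle

/-! ### The tilted law of an exponential variable -/

/-- The density, on `{T ≤ 1}`, of the law of an exponential variable `T` of rate `v` tilted by
`e^{θ v 1{T ≤ 1}}` with respect to the untilted law. The factor `e^{θv}` has been cancelled from
numerator and denominator; see `exp_mul_mul_div_eq_tiltDensity_mul`. -/
noncomputable def tiltDensity (θ v : ℝ) : ℝ := (1 - exp (-v) + exp (-(1 + θ) * v))⁻¹

lemma exp_mul_mul_div_eq_tiltDensity_mul (θ v u : ℝ) :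
    exp (θ * v) * u / (exp (θ * v) * (1 - exp (-v)) + exp (-v)) = tiltDensity θ v * u := by
  have hexp : exp (-v) = exp (θ * v) * exp (-(1 + θ) * v) := by
    rw [← exp_add]
    ring_nf
  have hdenom : exp (θ * v) * (1 - exp (-v)) + exp (-v)
      = exp (θ * v) * (1 - exp (-v) + exp (-(1 + θ) * v)) := by
    rw [mul_add, ← hexp]
  rw [hdenom, mul_div_mul_left _ _ (exp_pos _).ne', tiltDensity, div_eq_inv_mul]

@[fun_prop]
lemma measurable_tiltDensity (θ : ℝ) : Measurable (tiltDensity θ) := by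
  unfold tiltDensity
  fun_prop

lemma tiltDensity_pos (θ : ℝ) {v : ℝ} (hv : 0 ≤ v) : 0 < tiltDensity θ v :=
  inv_pos.2 (one_sub_exp_neg_add_exp_pos θ hv)

lemma tiltDensity_le (θ : ℝ) {v : ℝ} (hv : 0 ≤ v) : tiltDensity θ v ≤ max 1 (1 + θ) := by
  rcases le_total (1 + θ) 1 with hθ | hθ
  · have hle : exp (-v) ≤ exp (-(1 + θ) * v) := exp_le_exp.2 (by nlinarith)
    exact le_max_of_le_left (inv_le_one_of_one_le₀ (by linarith))
  · have bernoulli : 1 + (1 + θ) * (exp (-v) - 1) ≤ exp (-(1 + θ) * v) := by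
      have h := one_add_mul_self_le_rpow_one_add (s := exp (-v) - 1)
        (by linarith [exp_pos (-v)]) hθ
      rwa [add_sub_cancel, ← exp_mul, neg_mul_comm, mul_comm v] at h
    refine le_max_of_le_right
      ((inv_le_iff_one_le_mul₀ (one_sub_exp_neg_add_exp_pos θ hv)).2 ?_)
    linarith [mul_nonneg (sub_nonneg.2 hθ) (exp_pos (-(1 + θ) * v)).le]

lemma tendsto_tiltDensity_atTop {θ : ℝ} (hθ : -1 < θ) : Tendsto (tiltDensity θ) atTop (𝓝 1) := by
  have hexp : Tendsto (fun v => exp (-(1 + θ) * v)) atTop (𝓝 0) :=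
    tendsto_exp_atBot.comp (tendsto_id.const_mul_atTop_of_neg (by linarith))
  have hdenom := (tendsto_exp_neg_atTop_nhds_zero.const_sub 1).add hexp
  rw [sub_zero, add_zero] at hdenom
  rw [← inv_one]
  exact hdenom.inv₀ one_ne_zero

/-- The probability `p(v, a)` that the tilted exponential variable of rate `v` is at most `a`. -/
noncomputable def probBefore (θ v a : ℝ) : ℝ :=
  exp (θ * v) * (1 - exp (-a * v)) / (exp (θ * v) * (1 - exp (-v)) + exp (-v))

/-- The probability `q(v, a)` that the tilted exponential variable of rate `v` lies in `(a, 1]`. -/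
noncomputable def probAfter (θ v a : ℝ) : ℝ :=
  exp (θ * v) * (exp (-a * v) - exp (-v)) / (exp (θ * v) * (1 - exp (-v)) + exp (-v))

/-- The variance integral `I_V(a)`. -/
noncomputable def varianceBefore (τ θ a : ℝ) : ℝ :=
  (τ - 1) * ∫ v in Ioi 0, probBefore θ v a * (1 - probBefore θ v a) * v ^ (-(τ - 2))

/-- The variance integral `J_V(a)`. -/
noncomputable def varianceAfter (τ θ a : ℝ) : ℝ :=
  (τ - 1) * ∫ v in Ioi 0, probAfter θ v a * (1 - probAfter θ v a) * v ^ (-(τ - 2))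

/-! ### Behaviour as `a → 0` -/

lemma probBefore_eq (θ v a : ℝ) : probBefore θ v a = tiltDensity θ v * (1 - exp (-a * v)) :=
  exp_mul_mul_div_eq_tiltDensity_mul θ v _

lemma one_sub_probBefore_eq (θ a : ℝ) {v : ℝ} (hv : 0 ≤ v) :
    1 - probBefore θ v a
      = tiltDensity θ v * (exp (-a * v) - exp (-v) + exp (-(1 + θ) * v)) := by
  have hinv : tiltDensity θ v * (1 - exp (-v) + exp (-(1 + θ) * v)) = 1 :=
    inv_mul_cancel₀ (one_sub_exp_neg_add_exp_pos θ hv).ne'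
  rw [probBefore_eq]
  linear_combination -hinv

lemma abs_probBefore_le (θ : ℝ) {v a : ℝ} (hv : 0 ≤ v) (ha : 0 ≤ a) :
    |probBefore θ v a| ≤ max 1 (1 + θ) * (a * v) := by
  have hnonneg : 0 ≤ 1 - exp (-a * v) := sub_nonneg.2 (exp_le_one_iff.2 (by nlinarith))
  rw [probBefore_eq, abs_of_nonneg (mul_nonneg (tiltDensity_pos θ hv).le hnonneg)]
  exact mul_le_mul (tiltDensity_le θ hv) (by linarith [add_one_le_exp (-a * v)]) hnonneg
    (by positivity)

lemma abs_one_sub_probBefore_le {θ v a : ℝ} (hθ : -1 ≤ θ) (hv : 0 ≤ v) (ha : a ≤ 1) :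
    |1 - probBefore θ v a|
      ≤ max 1 (1 + θ) * (exp (-(a * v)) + exp (-((1 + θ) * (a * v)))) := by
  have hav : a * v ≤ v := mul_le_of_le_one_left hv ha
  have hle : exp (-v) ≤ exp (-a * v) := exp_le_exp.2 (by linarith)
  have htail : exp (-(1 + θ) * v) ≤ exp (-((1 + θ) * (a * v))) :=
    exp_le_exp.2 (by linarith [mul_le_mul_of_nonneg_left hav (by linarith : 0 ≤ 1 + θ)])
  have hnonneg : 0 ≤ exp (-a * v) - exp (-v) + exp (-(1 + θ) * v) :=
    add_nonneg (sub_nonneg.2 hle) (exp_pos _).le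
  rw [one_sub_probBefore_eq θ a hv, abs_of_nonneg (mul_nonneg (tiltDensity_pos θ hv).le hnonneg),
    ← neg_mul a]
  exact mul_le_mul (tiltDensity_le θ hv) (by linarith [exp_pos (-v)]) hnonneg (by positivity)

lemma tendsto_probBefore_inv_mul {θ y : ℝ} (hθ : -1 < θ) (hy : 0 < y) :
    Tendsto (fun a => probBefore θ (a⁻¹ * y) a) (𝓝[>] 0) (𝓝 (1 - exp (-y))) := by
  have hw := (tendsto_tiltDensity_atTop hθ).comp (tendsto_inv_nhdsGT_zero.atTop_mul_const hy)
  rw [← one_mul (1 - exp (-y))]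
  refine (hw.mul_const (1 - exp (-y))).congr' ?_
  filter_upwards [self_mem_nhdsWithin] with a ha
  rw [probBefore_eq, neg_mul, mul_inv_cancel_left₀ (ne_of_gt ha), Function.comp_apply]

lemma tendsto_integral_probBefore_inv_mul {θ r : ℝ} (hθ : -1 < θ) (hr : -2 < r) :
    Tendsto (fun a => ∫ y in Ioi 0,
        probBefore θ (a⁻¹ * y) a * (1 - probBefore θ (a⁻¹ * y) a) * y ^ r)
      (𝓝[>] 0) (𝓝 (∫ y in Ioi 0, (1 - exp (-y)) * exp (-y) * y ^ r)) := by
  have hbound : IntegrableOn (fun y => max 1 (1 + θ) ^ 2 *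
      (y * exp (-(1 * y)) * y ^ r + y * exp (-((1 + θ) * y)) * y ^ r)) (Ioi 0) :=
    ((integrableOn_mul_exp_neg_mul_mul_rpow one_pos hr).add
      (integrableOn_mul_exp_neg_mul_mul_rpow (by linarith : 0 < 1 + θ) hr)).const_mul _
  refine tendsto_integral_filter_of_dominated_convergence _
    (.of_forall fun a => Measurable.aestronglyMeasurable ?_) ?_ hbound ?_
  · simp only [probBefore_eq]
    fun_prop
  · filter_upwards [Ioo_mem_nhdsGT one_pos] with a ha
    filter_upwards [ae_restrict_mem measurableSet_Ioi] with y hy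
    have hy0 : 0 ≤ y := le_of_lt hy
    have hyr : 0 ≤ y ^ r := rpow_nonneg hy0 r
    have hay : 0 ≤ a⁻¹ * y := (mul_pos (inv_pos.2 ha.1) hy).le
    have hp := abs_probBefore_le θ hay ha.1.le
    have hp' := abs_one_sub_probBefore_le hθ.le hay ha.2.le
    rw [mul_inv_cancel_left₀ ha.1.ne'] at hp hp'
    calc ‖probBefore θ (a⁻¹ * y) a * (1 - probBefore θ (a⁻¹ * y) a) * y ^ r‖
        = |probBefore θ (a⁻¹ * y) a| * |1 - probBefore θ (a⁻¹ * y) a| * y ^ r := by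
          rw [norm_eq_abs, abs_mul, abs_mul, abs_of_nonneg hyr]
      _ ≤ max 1 (1 + θ) * y * (max 1 (1 + θ) * (exp (-y) + exp (-((1 + θ) * y)))) * y ^ r := by
          gcongr
      _ = max 1 (1 + θ) ^ 2 *
          (y * exp (-(1 * y)) * y ^ r + y * exp (-((1 + θ) * y)) * y ^ r) := by
          rw [one_mul]
          ring
  · filter_upwards [ae_restrict_mem measurableSet_Ioi] with y hy
    have hp := tendsto_probBefore_inv_mul hθ hy
    simpa using (hp.mul (hp.const_sub 1)).mul_const (y ^ r)

lemma integral_one_sub_exp_neg_mul_exp_neg_mul_rpow_pos {r : ℝ} (hr : -2 < r) :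
    0 < ∫ y in Ioi 0, (1 - exp (-y)) * exp (-y) * y ^ r := by
  have hpos : ∀ y ∈ Ioi (0 : ℝ), 0 < (1 - exp (-y)) * exp (-y) * y ^ r := fun y hy =>
    mul_pos (mul_pos (sub_pos.2 (exp_lt_one_iff.2 (neg_lt_zero.2 hy))) (exp_pos _))
      (rpow_pos_of_pos hy r)
  refine setIntegral_pos_of_forall_pos measurableSet_Ioi (by simp) ?_ hpos
  refine Integrable.mono' (integrableOn_mul_exp_neg_mul_mul_rpow one_pos hr)
    (Measurable.aestronglyMeasurable (by fun_prop)) ?_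
  filter_upwards [ae_restrict_mem measurableSet_Ioi] with y hy
  rw [norm_of_nonneg (hpos y hy).le, one_mul]
  have hyr : 0 ≤ y ^ r := rpow_nonneg (le_of_lt hy) r
  gcongr
  linarith [add_one_le_exp (-y)]

lemma tendsto_varianceBefore_div_rpow {τ θ : ℝ} (hτ : τ < 4) (hθ : -1 < θ) :
    Tendsto (fun a => varianceBefore τ θ a / a ^ (τ - 3)) (𝓝[>] 0)
      (𝓝 ((τ - 1) * ∫ y in Ioi 0, (1 - exp (-y)) * exp (-y) * y ^ (-(τ - 2)))) := by
  refine ((tendsto_integral_probBefore_inv_mul hθ (by linarith)).const_mul (τ - 1)).congr' ?_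
  filter_upwards [self_mem_nhdsWithin] with a ha
  rw [integral_comp_inv_mul_mul_rpow (fun v => probBefore θ v a * (1 - probBefore θ v a)) _ ha,
    varianceBefore, mul_div_assoc, div_eq_mul_inv, ← rpow_neg (le_of_lt ha)]
  ring_nf

/-! ### Behaviour as `a → 1` -/

lemma probAfter_eq (θ v a : ℝ) :
    probAfter θ v a = tiltDensity θ v * (exp (-a * v) - exp (-v)) :=
  exp_mul_mul_div_eq_tiltDensity_mul θ v _

lemma probAfter_one (θ v : ℝ) : probAfter θ v 1 = 0 := by simp [probAfter]

lemma abs_probAfter_le (θ : ℝ) {v a : ℝ} (hv : 0 ≤ v) (ha : 0 ≤ a) :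
    |probAfter θ v a| ≤ max 1 (1 + θ) := by
  have hav : exp (-a * v) ≤ 1 := exp_le_one_iff.2 (by nlinarith)
  have hv1 : exp (-v) ≤ 1 := exp_le_one_iff.2 (by linarith)
  have hdiff : |exp (-a * v) - exp (-v)| ≤ 1 :=
    abs_le.2 ⟨by linarith [exp_pos (-a * v)], by linarith [exp_pos (-v)]⟩
  rw [probAfter_eq, abs_mul, abs_of_pos (tiltDensity_pos θ hv)]
  exact (mul_le_of_le_one_right (tiltDensity_pos θ hv).le hdiff).trans (tiltDensity_le θ hv)

lemma hasDerivAt_probAfter (θ v a : ℝ) :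
    HasDerivAt (probAfter θ v) (-(tiltDensity θ v * (v * exp (-a * v)))) a := by
  have hexp : HasDerivAt (fun a : ℝ => exp (-a * v)) (exp (-a * v) * (-1 * v)) a :=
    ((hasDerivAt_neg a).mul_const v).exp
  rw [funext (probAfter_eq θ v)]
  convert! (hexp.sub_const (exp (-v))).const_mul (tiltDensity θ v) using 1
  ring

lemma hasDerivAt_probAfter_mul_one_sub (θ v a : ℝ) :
    HasDerivAt (fun a => probAfter θ v a * (1 - probAfter θ v a))
      (-(tiltDensity θ v * (v * exp (-a * v))) * (1 - 2 * probAfter θ v a)) a := by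
  have hq := hasDerivAt_probAfter θ v a
  convert! hq.mul (hq.const_sub 1) using 1
  ring

lemma abs_deriv_probAfter_mul_one_sub_le (θ : ℝ) {v a b : ℝ} (hv : 0 ≤ v) (hb : 0 ≤ b)
    (hba : b ≤ a) :
    |-(tiltDensity θ v * (v * exp (-a * v))) * (1 - 2 * probAfter θ v a)|
      ≤ max 1 (1 + θ) * (1 + 2 * max 1 (1 + θ)) * (v * exp (-(b * v))) := by
  have hw := tiltDensity_pos θ hv
  have hexp : exp (-a * v) ≤ exp (-(b * v)) :=
    exp_le_exp.2 (by linarith [mul_le_mul_of_nonneg_right hba hv])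
  have hq : |1 - 2 * probAfter θ v a| ≤ 1 + 2 * max 1 (1 + θ) := by
    have h := abs_le.1 (abs_probAfter_le θ hv (hb.trans hba))
    exact abs_le.2 ⟨by linarith, by linarith⟩
  calc |-(tiltDensity θ v * (v * exp (-a * v))) * (1 - 2 * probAfter θ v a)|
      = tiltDensity θ v * (v * exp (-a * v)) * |1 - 2 * probAfter θ v a| := by
        rw [abs_mul, abs_neg, abs_of_nonneg (by positivity)]
    _ ≤ max 1 (1 + θ) * (v * exp (-(b * v))) * (1 + 2 * max 1 (1 + θ)) := by
        gcongr
        exact tiltDensity_le θ hv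
    _ = max 1 (1 + θ) * (1 + 2 * max 1 (1 + θ)) * (v * exp (-(b * v))) := by ring

lemma hasDerivAt_integral_probAfter (θ : ℝ) {r : ℝ} (hr : -2 < r) :
    HasDerivAt (fun a => ∫ v in Ioi 0, probAfter θ v a * (1 - probAfter θ v a) * v ^ r)
      (-∫ v in Ioi 0, tiltDensity θ v * (v * exp (-v)) * v ^ r) 1 := by
  have hbound := (integrableOn_mul_exp_neg_mul_mul_rpow one_half_pos hr).const_mul
    (max 1 (1 + θ) * (1 + 2 * max 1 (1 + θ)))
  have hderiv := (hasDerivAt_integral_of_dominated_loc_of_deriv_le (μ := volume.restrict (Ioi 0))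
    (F := fun a v => probAfter θ v a * (1 - probAfter θ v a) * v ^ r)
    (F' := fun a v => -(tiltDensity θ v * (v * exp (-a * v))) * (1 - 2 * probAfter θ v a) * v ^ r)
    (Ici_mem_nhds one_half_lt_one)
    (.of_forall fun a => Measurable.aestronglyMeasurable ?_) ?_
    (Measurable.aestronglyMeasurable ?_) ?_ hbound ?_).2
  · convert! hderiv using 1
    simp only [probAfter_one, neg_mul, one_mul, mul_zero, sub_zero, mul_one, integral_neg]
  · simp only [probAfter_eq]
    fun_prop
  · simp [probAfter_one]
  · simp only [probAfter_eq]
    fun_prop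
  · filter_upwards [ae_restrict_mem measurableSet_Ioi] with v hv a ha
    have hvr : 0 ≤ v ^ r := rpow_nonneg (le_of_lt hv) r
    rw [norm_mul, norm_of_nonneg hvr, ← mul_assoc (max 1 (1 + θ) * _)]
    exact mul_le_mul_of_nonneg_right
      (abs_deriv_probAfter_mul_one_sub_le θ (le_of_lt hv) one_half_pos.le ha) hvr
  · exact .of_forall fun v a _ => (hasDerivAt_probAfter_mul_one_sub θ v a).mul_const _

lemma integral_tiltDensity_mul_pos (θ : ℝ) {r : ℝ} (hr : -2 < r) :
    0 < ∫ v in Ioi 0, tiltDensity θ v * (v * exp (-v)) * v ^ r := by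
  have hpos : ∀ v ∈ Ioi (0 : ℝ), 0 < tiltDensity θ v * (v * exp (-v)) * v ^ r := fun v hv =>
    mul_pos (mul_pos (tiltDensity_pos θ (le_of_lt hv)) (mul_pos hv (exp_pos _)))
      (rpow_pos_of_pos hv r)
  refine setIntegral_pos_of_forall_pos measurableSet_Ioi (by simp) ?_ hpos
  refine Integrable.mono'
    ((integrableOn_mul_exp_neg_mul_mul_rpow one_pos hr).const_mul (max 1 (1 + θ)))
    (Measurable.aestronglyMeasurable (by fun_prop)) ?_
  filter_upwards [ae_restrict_mem measurableSet_Ioi] with v hv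
  have hv0 : 0 ≤ v := le_of_lt hv
  rw [norm_of_nonneg (hpos v hv).le, one_mul, ← mul_assoc (max 1 (1 + θ))]
  gcongr
  exact tiltDensity_le θ hv0

lemma varianceAfter_one (τ θ : ℝ) : varianceAfter τ θ 1 = 0 := by
  simp [varianceAfter, probAfter_one]

lemma hasDerivAt_varianceAfter_one {τ : ℝ} (hτ : τ < 4) (θ : ℝ) :
    HasDerivAt (varianceAfter τ θ)
      (-((τ - 1) * ∫ v in Ioi 0, tiltDensity θ v * (v * exp (-v)) * v ^ (-(τ - 2)))) 1 := by
  rw [← mul_neg]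
  exact (hasDerivAt_integral_probAfter θ (by linarith)).const_mul (τ - 1)

theorem IV_JV_near_extremities_general {τ θ : ℝ} (hτ : τ ∈ Ioo (1 : ℝ) 4) (hθ : -1 < θ) :
    (derivWithin (varianceAfter τ θ) (Icc 0 1) 1 < 0 ∧
      Tendsto (fun a => varianceAfter τ θ a / (1 - a)) (𝓝[Ico 0 1] 1)
        (𝓝 (-derivWithin (varianceAfter τ θ) (Icc 0 1) 1))) ∧
    Tendsto (fun a => varianceBefore τ θ a / a ^ (τ - 3)) (𝓝[>] 0)
      (𝓝 ((τ - 1) * ∫ y in Ioi 0, (1 - exp (-y)) * exp (-y) * y ^ (-(τ - 2)))) ∧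
    ∃ c₁ c₂ ε : ℝ, 0 < c₁ ∧ c₁ < c₂ ∧ 0 < ε ∧ ∀ a ∈ Ioc 0 ε,
      c₁ * a ^ (τ - 3) ≤ varianceBefore τ θ a ∧ varianceBefore τ θ a ≤ c₂ * a ^ (τ - 3) := by
  have hτ1 : 0 < τ - 1 := sub_pos.2 hτ.1
  have hr : -2 < -(τ - 2) := by linarith [hτ.2]
  have hJ := hasDerivAt_varianceAfter_one hτ.2 θ
  have hI := tendsto_varianceBefore_div_rpow hτ.2 hθ
  rw [hJ.hasDerivWithinAt.derivWithin (uniqueDiffOn_Icc_zero_one 1 (by simp))]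
  exact ⟨⟨neg_lt_zero.2 (mul_pos hτ1 (integral_tiltDensity_mul_pos θ hr)),
      (tendsto_div_sub_of_hasDerivAt hJ (varianceAfter_one τ θ)).mono_left
        (nhdsWithin_mono 1 fun a ha => ha.2.ne)⟩,
    hI, exists_mul_le_and_le_mul_of_tendsto_div
      (mul_pos hτ1 (integral_one_sub_exp_neg_mul_exp_neg_mul_rpow_pos hr))
      (fun a ha => rpow_pos_of_pos ha _) hI⟩

end

/-- Lemma 4.4(b), asymptotic variance near the extremities.
(i) As `a → 1`, `J_V(a) = -(1-a) J_V'(1)(1+o(1))` with `J_V'(1) < 0`;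
(ii) as `a → 0`, `I_V(a) = a^{τ-3} 𝓘_V (1+o(1))`, where
`𝓘_V = (τ-1)∫_0^∞ (1-e^{-y}) e^{-y} y^{-(τ-2)} dy`; consequently there are constants
`0 < c̲ < c̄ < ∞` and `ε > 0` with `c̲ a^{τ-3} ≤ I_V(a) ≤ c̄ a^{τ-3}` for all `a ∈ (0,ε]`. -/
theorem IV_JV_near_extremities
    (τ α : ℝ) (hτ : τ ∈ Set.Ioo (3 : ℝ) 4) (hα : α = 1 / (τ - 1))
    (f : ℝ → ℝ → ℝ)
    (hf : ∀ x θ' : ℝ, f x θ'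
      = Real.log (1 + Real.exp (-x ^ (-α)) * (Real.exp (-θ' * x ^ (-α)) - 1))
        + θ' * x ^ (-α) - θ' * x ^ (-(2 * α)))
    (Λ : ℝ → ℝ) (hΛ : ∀ θ', Λ θ' = ∫ x in Set.Ioi (0 : ℝ), f x θ')
    (θstar : ℝ) (hθstar : ∀ θ', Λ θstar ≤ Λ θ')
    (p q : ℝ → ℝ → ℝ)
    (hp : ∀ v a : ℝ, p v a
      = Real.exp (θstar * v) * (1 - Real.exp (-a * v)) /
          (Real.exp (θstar * v) * (1 - Real.exp (-v)) + Real.exp (-v)))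
    (hq : ∀ v a : ℝ, q v a
      = Real.exp (θstar * v) * (Real.exp (-a * v) - Real.exp (-v)) /
          (Real.exp (θstar * v) * (1 - Real.exp (-v)) + Real.exp (-v)))
    (IV JV : ℝ → ℝ)
    (hIV : ∀ a : ℝ, IV a = (τ - 1) * ∫ v in Set.Ioi (0 : ℝ),
      p v a * (1 - p v a) * v ^ (-(τ - 2)))
    (hJV : ∀ a : ℝ, JV a = (τ - 1) * ∫ v in Set.Ioi (0 : ℝ),
      q v a * (1 - q v a) * v ^ (-(τ - 2)))
    (𝓘V : ℝ)
    (h𝓘V : 𝓘V = (τ - 1) * ∫ y in Set.Ioi (0 : ℝ),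
      (1 - Real.exp (-y)) * Real.exp (-y) * y ^ (-(τ - 2))) :
    (derivWithin JV (Set.Icc (0 : ℝ) 1) 1 < 0 ∧
      Tendsto (fun a : ℝ => JV a / (1 - a)) (nhdsWithin 1 (Set.Ico (0 : ℝ) 1))
        (nhds (-(derivWithin JV (Set.Icc (0 : ℝ) 1) 1)))) ∧
    Tendsto (fun a : ℝ => IV a / a ^ (τ - 3)) (nhdsWithin 0 (Set.Ioi (0 : ℝ))) (nhds 𝓘V) ∧
    ∃ c₁ c₂ ε : ℝ, 0 < c₁ ∧ c₁ < c₂ ∧ 0 < ε ∧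
      ∀ a ∈ Set.Ioc (0 : ℝ) ε, c₁ * a ^ (τ - 3) ≤ IV a ∧ IV a ≤ c₂ * a ^ (τ - 3) := by
  have hα3 : α ∈ Set.Ioo (1 / 3 : ℝ) (1 / 2) := by
    rw [hα]
    exact ⟨one_div_lt_one_div_of_lt (by linarith [hτ.1]) (by linarith [hτ.2]),
      one_div_lt_one_div_of_lt two_pos (by linarith [hτ.1])⟩
  obtain rfl : f = rateIntegrand α := funext₂ hf
  obtain rfl : p = probBefore θstar := funext₂ hp
  obtain rfl : q = probAfter θstar := funext₂ hq
  obtain rfl : IV = varianceBefore τ θstar := funext hIV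
  obtain rfl : JV = varianceAfter τ θstar := funext hJV
  have hθ : 0 ≤ θstar := nonneg_of_forall_integral_rateIntegrand_le hα3 fun θ' => by
    simpa only [hΛ] using hθstar θ'
  rw [h𝓘V]
  exact IV_JV_near_extremities_general ⟨by linarith [hτ.1], hτ.2⟩ (by linarith)
end
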